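/- arXiv:2510.07405 — 2 statements merged into one kernel-verified Lean document; each statement's English description precedes it below -/
import Mathlib

section
/- Let A be a 2-Calabi-Yau tilted algebra, J = A e_i A, B = A/J. For every Cohen-Macaulay B-module Y there exists a short exact sequence of A-modules 0 → J_X → X → Y → 0 with J_X ∈ add J, X ∈ J^⊥, and J_X → X an add-J approximation of X; in particular F(X) ≅ Y, so the functor F : J^⊥ → CMP B is dense. -/
noncomputable section

open CategoryTheory Opposite DirectSum MulOpposite

/-- An idempotent is primitive if it is nonzero and is not the sum of two nonzero
orthogonal idempotents. -/
def IsPrimitiveIdempotent {A : Type} [Ring A] (a : A) : Prop :=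
  IsIdempotentElem a ∧ a ≠ 0 ∧
    ∀ b c : A, IsIdempotentElem b → IsIdempotentElem c → b * c = 0 → c * b = 0 →
      a = b + c → b = 0 ∨ c = 0

/-- A complete family of orthogonal idempotents. -/
def CompOrthIdem {A ι : Type} [Ring A] [Fintype ι] (e : ι → A) : Prop :=
  (∀ i j, i ≠ j → e i * e j = 0) ∧ (∀ i, IsIdempotentElem (e i)) ∧ (∑ i, e i) = 1

/-- The two-sided ideal `A e A` generated by an idempotent `e`, viewed as a
right `A`-module (i.e. a module over `Aᵐᵒᵖ`): it is the right `A`-submodule of `A`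
spanned by all elements `b * e`. -/
def genIdeal {A : Type} [Ring A] (e : A) : Submodule Aᵐᵒᵖ A :=
  Submodule.span Aᵐᵒᵖ {x | ∃ b : A, x = b * e}

/-- The indecomposable projective right module `e A` at the idempotent `e`. -/
def pIdeal {A : Type} [Ring A] (e : A) : Submodule Aᵐᵒᵖ A :=
  Submodule.span Aᵐᵒᵖ ({e} : Set A)

/-- The radical of a module: the intersection of all maximal submodules.
For a finite dimensional module `M` over a finite dimensional algebra this is `M · rad A`. -/
def radical (R M : Type) [Ring R] [AddCommGroup M] [Module R M] : Submodule R M :=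
  sInf {m | IsCoatom m}

/-- `Ext¹` for right `A`-modules, as a `k`-module. -/
abbrev rext1 (k : Type) [Field k] (A : Type) [Ring A] [Algebra k A]
    (M N : ModuleCat.{0} Aᵐᵒᵖ) : ModuleCat.{0} k :=
  ((Ext k (ModuleCat.{0} Aᵐᵒᵖ) 1).obj (op M)).obj N

/-- A right `A`-module `M` is Cohen-Macaulay if `Ext¹_A(M, A) = 0`. -/
def IsCM (k : Type) [Field k] (A : Type) [Ring A] [Algebra k A]
    (M : ModuleCat.{0} Aᵐᵒᵖ) : Prop :=
  Subsingleton (rext1 k A M (ModuleCat.of Aᵐᵒᵖ A))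

/-- A witness that `B` is a 2-Calabi-Yau tilted algebra: a Hom-finite, idempotent
complete (hence Krull-Schmidt), `k`-linear triangulated 2-Calabi-Yau category `C`
together with a cluster-tilting object `T` such that `B ≅ End_C T`. -/
structure CYTiltedWitness (k : Type) [Field k] (B : Type) [Ring B] [Algebra k B] :
    Type 1 where
  C : Type
  [cat : Category.{0} C]
  [pre : Preadditive C]
  [lin : Linear k C]
  [shift : HasShift C ℤ]
  [zero : Limits.HasZeroObject C]
  [shiftAdd : ∀ n : ℤ, (shiftFunctor C n).Additive]
  [tri : Pretriangulated C]
  [biprod : Limits.HasFiniteBiproducts C]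
  [idem : IsIdempotentComplete C]
  homFinite : ∀ X Y : C, FiniteDimensional k (X ⟶ Y)
  /-- the 2-Calabi-Yau property: a Serre duality `D Hom(X,Y) ≅ Hom(Y, X⟦2⟧)` -/
  serre : ∀ X Y : C, Nonempty ((X ⟶ Y) ≃ₗ[k] Module.Dual k (Y ⟶ X⟦(2:ℤ)⟧))
  T : C
  /-- `T` is cluster-tilting: `add T = {X | Ext¹(T, X) = 0}` -/
  clusterTilting : ∀ X : C, (∀ f : T ⟶ X⟦(1:ℤ)⟧, f = 0) ↔
    ∃ (n : ℕ) (s : X ⟶ ⨁ (fun _ : Fin n => T)) (r : (⨁ (fun _ : Fin n => T)) ⟶ X),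
      s ≫ r = 𝟙 X
  algIso : Nonempty (B ≃ₐ[k] End T)

/-- `B` is a 2-Calabi-Yau tilted algebra. -/
def IsCYTilted (k : Type) [Field k] (B : Type) [Ring B] [Algebra k B] : Prop :=
  Nonempty (CYTiltedWitness k B)

/-- `M` is a module over `B = A/AeA`: the ideal `J = AeA` acts trivially. -/
def JTriv {A : Type} [Ring A] (e : A) (M : Type) [AddCommGroup M]
    [Module Aᵐᵒᵖ M] : Prop :=
  ∀ a ∈ genIdeal e, ∀ m : M, (MulOpposite.op a) • m = 0

/-- `N` belongs to `add J`, i.e. is a direct summand of a finite direct sum of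
copies of `J = AeA`. -/
def InAddJ {A : Type} [Ring A] (e : A) (N : ModuleCat.{0} Aᵐᵒᵖ) : Prop :=
  ∃ (n : ℕ) (s : N →ₗ[Aᵐᵒᵖ] (Fin n → ↥(genIdeal e)))
    (r : (Fin n → ↥(genIdeal e)) →ₗ[Aᵐᵒᵖ] N), r ∘ₗ s = LinearMap.id

/-- `f : J_X → X` is an `add J`-approximation: `J_X ∈ add J` and every map from a
module of `add J` to `X` factors through `f`. -/
def IsAddJApprox {A : Type} [Ring A] (e : A) (JX X : ModuleCat.{0} Aᵐᵒᵖ)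
    (f : JX →ₗ[Aᵐᵒᵖ] X) : Prop :=
  InAddJ e JX ∧ ∀ (Z : ModuleCat.{0} Aᵐᵒᵖ), InAddJ e Z →
    ∀ g : Z →ₗ[Aᵐᵒᵖ] X, ∃ h : Z →ₗ[Aᵐᵒᵖ] JX, f ∘ₗ h = g


/-! ### Part 1: module-theoretic `Ext¹`-vanishing -/

/-- Elementary version of the vanishing of `Ext¹(M, N)`. -/
def ExtVan (R : Type) [Ring R] (M N : Type) [AddCommGroup M] [Module R M]
    [AddCommGroup N] [Module R N] : Prop :=
  ∀ (P : Type) [AddCommGroup P] [Module R P] (p : P →ₗ[R] M), Function.Surjective p →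
    ∀ f : LinearMap.ker p →ₗ[R] N, ∃ g : P →ₗ[R] N, ∀ x : LinearMap.ker p, g x = f x

section ExtVan

variable {R : Type} [Ring R]

theorem factor_surj {S Q N : Type} [AddCommGroup S] [Module R S] [AddCommGroup Q] [Module R Q]
    [AddCommGroup N] [Module R N] (s : S →ₗ[R] Q) (hs : Function.Surjective s)
    (t : S →ₗ[R] N) (h : ∀ x, s x = 0 → t x = 0) : ∃ u : Q →ₗ[R] N, ∀ x, u (s x) = t x := by
  refine ⟨((LinearMap.ker s).liftQ t (fun x hx => h x hx)) ∘ₗ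
    (s.quotKerEquivOfSurjective hs).symm.toLinearMap, fun x => ?_⟩
  have : (s.quotKerEquivOfSurjective hs).symm (s x) = (LinearMap.ker s).mkQ x := by
    rw [LinearEquiv.symm_apply_eq]; rfl
  simp only [LinearMap.comp_apply, LinearEquiv.coe_coe]
  rw [this]; rfl

theorem extend_along {P Q M N : Type} [AddCommGroup P] [Module R P] [AddCommGroup Q] [Module R Q]
    [AddCommGroup M] [Module R M] [AddCommGroup N] [Module R N]
    (p : P →ₗ[R] M) (hp : Function.Surjective p) (q : Q →ₗ[R] M)
    (a : P →ₗ[R] Q) (ha : ∀ x, q (a x) = p x) (f : LinearMap.ker q →ₗ[R] N)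
    (g : P →ₗ[R] N) (hg : ∀ x (hx : p x = 0), g x = f ⟨a x, by simp [ha, hx]⟩) :
    ∃ h : Q →ₗ[R] N, ∀ x : LinearMap.ker q, h x = f x := by
  obtain ⟨u, hu⟩ := factor_surj (R := R)
    (a.coprod (LinearMap.ker q).subtype : P × LinearMap.ker q →ₗ[R] Q) (by
      intro y
      obtain ⟨x, hx⟩ := hp (q y)
      refine ⟨(x, ⟨y - a x, by simp [ha, hx]⟩), by simp⟩)
    (g.coprod f) (by
      rintro ⟨x, y⟩ hxy
      simp only [LinearMap.coprod_apply, Submodule.subtype_apply] at hxy ⊢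
      have hx : p x = 0 := by
        have := congrArg q hxy
        simpa [ha] using this
      rw [hg x hx, ← map_add]
      convert map_zero f
      exact Subtype.ext hxy)
  exact ⟨u, fun x => by simpa using hu (0, x)⟩

theorem extVan_of_proj {P M N : Type} [AddCommGroup P] [Module R P]
    [AddCommGroup M] [Module R M] [AddCommGroup N] [Module R N] [Module.Projective R P]
    (p : P →ₗ[R] M) (hp : Function.Surjective p)
    (H : ∀ f : LinearMap.ker p →ₗ[R] N, ∃ g : P →ₗ[R] N, ∀ x : LinearMap.ker p, g x = f x) :
    ExtVan R M N := by
  intro Q _ _ q hq f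
  obtain ⟨a, ha⟩ := Module.projective_lifting_property q p hq
  have ha' : ∀ x, q (a x) = p x := fun x => LinearMap.congr_fun ha x
  obtain ⟨g, hg⟩ := H (f ∘ₗ (a.restrict (p := LinearMap.ker p) (q := LinearMap.ker q)
    (by intro x hx; simpa [ha'] using hx)))
  refine extend_along p hp q a ha' f g (fun x hx => ?_)
  rw [hg ⟨x, hx⟩]; rfl

theorem extVan_lift {M N E E'' : Type} [AddCommGroup M] [Module R M] [AddCommGroup N] [Module R N]
    [AddCommGroup E] [Module R E] [AddCommGroup E''] [Module R E'']
    (H : ExtVan R M N) (i : N →ₗ[R] E) (hi : Function.Injective i) (q : E →ₗ[R] E'')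
    (hq : Function.Surjective q) (hiq : Function.Exact i q) (φ : M →ₗ[R] E'') :
    ∃ θ : M →ₗ[R] E, ∀ m, q (θ m) = φ m := by
  let S : Submodule R (M × E) :=
    LinearMap.ker (φ ∘ₗ LinearMap.fst R M E - q ∘ₗ LinearMap.snd R M E)
  have hS : ∀ x : S, φ x.1.1 = q x.1.2 := fun x => by
    have h : φ x.1.1 - q x.1.2 = 0 := x.2
    exact sub_eq_zero.1 h
  let p : S →ₗ[R] M := LinearMap.fst R M E ∘ₗ S.subtype
  have hp : Function.Surjective p := by
    intro m
    obtain ⟨y, hy⟩ := hq (φ m)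
    exact ⟨⟨(m, y), by simp [S, hy]⟩, rfl⟩
  have hk : ∀ x : LinearMap.ker p, x.1.1.2 ∈ LinearMap.range i := by
    intro x
    have h1 : x.1.1.1 = 0 := x.2
    have h2 := hS x.1
    rw [h1, map_zero] at h2
    exact (hiq _).1 h2.symm
  let f : LinearMap.ker p →ₗ[R] N := (LinearEquiv.ofInjective i hi).symm.toLinearMap ∘ₗ
    (LinearMap.codRestrict (LinearMap.range i)
      (LinearMap.snd R M E ∘ₗ S.subtype ∘ₗ (LinearMap.ker p).subtype) hk)
  have hf : ∀ x, i (f x) = x.1.1.2 := by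
    intro x
    have := LinearEquiv.apply_symm_apply (LinearEquiv.ofInjective i hi) ⟨x.1.1.2, hk x⟩
    exact congrArg Subtype.val this
  obtain ⟨g, hg⟩ := H S p hp f
  obtain ⟨θ, hθ⟩ := factor_surj p hp (LinearMap.snd R M E ∘ₗ S.subtype - i ∘ₗ g) (by
    intro x hx
    have := hf ⟨x, hx⟩
    rw [← hg ⟨x, hx⟩] at this
    simp [this])
  refine ⟨θ, fun m => ?_⟩
  obtain ⟨x, rfl⟩ := hp m
  rw [hθ]
  have : q (i (g x)) = 0 := (hiq _).2 ⟨_, rfl⟩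
  simp [this, p, hS]

theorem pushout_ext {P M N : Type} [AddCommGroup P] [Module R P]
    [AddCommGroup M] [Module R M] [AddCommGroup N] [Module R N]
    (p : P →ₗ[R] M) (hp : Function.Surjective p) (f : LinearMap.ker p →ₗ[R] N) :
    ∃ (E : ModuleCat.{0} R) (u : N →ₗ[R] E) (v : E →ₗ[R] M) (w : P →ₗ[R] E),
      Function.Injective u ∧ Function.Surjective v ∧ Function.Exact u v ∧
      (∀ x, v (w x) = p x) ∧ ∀ x : LinearMap.ker p, w x = u (f x) := by
  let G : Submodule R (P × N) :=
    LinearMap.range ((LinearMap.ker p).subtype.prod (-f))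
  have hG : ∀ x n, (x, n) ∈ G ↔ ∃ h : p x = 0, n = - f ⟨x, h⟩ := by
    intro x n
    constructor
    · rintro ⟨y, hy⟩
      obtain ⟨rfl, rfl⟩ := Prod.mk.inj hy
      exact ⟨y.2, rfl⟩
    · rintro ⟨h, rfl⟩
      exact ⟨⟨x, h⟩, rfl⟩
  let u : N →ₗ[R] ((P × N) ⧸ G) := G.mkQ ∘ₗ LinearMap.inr R P N
  let v : ((P × N) ⧸ G) →ₗ[R] M := G.liftQ (p ∘ₗ LinearMap.fst R P N) (by
    rintro ⟨x, n⟩ hx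
    obtain ⟨h, -⟩ := (hG x n).1 hx
    simpa using h)
  have hv : ∀ x n, v (G.mkQ (x, n)) = p x := fun x n => by simp [v]
  have hu0 : ∀ n, u n = G.mkQ (0, n) := fun n => rfl
  have hui : Function.Injective u := by
    rw [injective_iff_map_eq_zero]
    intro n hn
    have : (0, n) ∈ G := by simpa [u] using hn
    obtain ⟨h, h2⟩ := (hG _ _).1 this
    have h3 : (⟨0, h⟩ : LinearMap.ker p) = 0 := rfl
    rw [h2, h3]; simp
  have huv : Function.Exact u v := by
    intro y
    obtain ⟨⟨x, n⟩, rfl⟩ := G.mkQ_surjective y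
    rw [hv]
    constructor
    · intro hx
      refine ⟨n + f ⟨x, hx⟩, ?_⟩
      rw [hu0, ← sub_eq_zero, ← map_sub]
      rw [Submodule.mkQ_apply, Submodule.Quotient.mk_eq_zero]
      have := G.neg_mem ((hG x _).2 ⟨hx, rfl⟩)
      convert this using 1
      ext <;> simp
    · rintro ⟨n', hn'⟩
      have := congrArg v hn'
      rw [hu0, hv, hv] at this
      simpa using this.symm
  refine ⟨ModuleCat.of R ((P × N) ⧸ G), u, v, G.mkQ ∘ₗ LinearMap.inl R P N, hui,
    (fun m => by obtain ⟨x, rfl⟩ := hp m; exact ⟨G.mkQ (x, 0), hv _ _⟩), huv, ?_, ?_⟩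
  · intro x
    exact hv x 0
  · intro x
    have hx : p x.1 = 0 := x.2
    rw [hu0, ← sub_eq_zero]
    change G.mkQ (x.1, 0) - G.mkQ (0, f x) = 0
    rw [← map_sub, Submodule.mkQ_apply, Submodule.Quotient.mk_eq_zero]
    refine (hG _ _).2 ⟨by simpa using hx, by simp⟩

theorem range_lift {P N E : Type} [AddCommGroup P] [Module R P]
    [AddCommGroup E] [Module R E] [AddCommGroup N] [Module R N]
    (u : N →ₗ[R] E) (hu : Function.Injective u) (w : P →ₗ[R] E)
    (hw : ∀ x, w x ∈ LinearMap.range u) : ∃ g : P →ₗ[R] N, ∀ x, u (g x) = w x := by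
  refine ⟨(LinearEquiv.ofInjective u hu).symm.toLinearMap ∘ₗ
    (LinearMap.codRestrict (LinearMap.range u) w hw), fun x => ?_⟩
  have := LinearEquiv.apply_symm_apply (LinearEquiv.ofInjective u hu) ⟨w x, hw x⟩
  exact congrArg Subtype.val this

theorem extVan_of_split {M N : Type} [AddCommGroup M] [Module R M] [AddCommGroup N] [Module R N]
    (H : ∀ (E : ModuleCat.{0} R) (u : N →ₗ[R] E) (v : E →ₗ[R] M), Function.Injective u →
      Function.Surjective v → Function.Exact u v → ∃ s : M →ₗ[R] E, v ∘ₗ s = LinearMap.id) :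
    ExtVan R M N := by
  intro P _ _ p hp f
  obtain ⟨E, u, v, w, hu, hv, huv, hvw, hw⟩ := pushout_ext p hp f
  obtain ⟨s, hs⟩ := H E u v hu hv huv
  have hs' : ∀ m, v (s m) = m := fun m => LinearMap.congr_fun hs m
  obtain ⟨g, hg⟩ := range_lift u hu (w - s ∘ₗ p) (fun x => (huv _).1 (by simp [hs', hvw]))
  refine ⟨g, fun x => hu ?_⟩
  have hx : p x.1 = 0 := x.2
  rw [hg, ← hw]
  simp [hx]

theorem extVan_mid_left {M' M M'' N : Type} [AddCommGroup M'] [Module R M'] [AddCommGroup M]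
    [Module R M] [AddCommGroup M''] [Module R M''] [AddCommGroup N] [Module R N]
    (i : M' →ₗ[R] M) (hi : Function.Injective i) (v : M →ₗ[R] M'') (hv : Function.Surjective v)
    (hiv : Function.Exact i v) (H1 : ExtVan R M' N) (H2 : ExtVan R M'' N) : ExtVan R M N := by
  intro P _ _ p hp f
  let S := LinearMap.ker (v ∘ₗ p)
  have hk : ∀ x : S, p x ∈ LinearMap.range i := fun x => (hiv _).1 x.2
  let r : S →ₗ[R] M' := (LinearEquiv.ofInjective i hi).symm.toLinearMap ∘ₗ
    (LinearMap.codRestrict (LinearMap.range i) (p ∘ₗ S.subtype) hk)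
  have hr : ∀ x, i (r x) = p x := by
    intro x
    have := LinearEquiv.apply_symm_apply (LinearEquiv.ofInjective i hi) ⟨p x, hk x⟩
    exact congrArg Subtype.val this
  have hrs : Function.Surjective r := by
    intro m
    obtain ⟨x, hx⟩ := hp (i m)
    refine ⟨⟨x, ?_⟩, hi ?_⟩
    · simp only [S, LinearMap.mem_ker, LinearMap.comp_apply, hx]
      exact (hiv _).2 ⟨m, rfl⟩
    · rw [hr]; exact hx
  have hkr : ∀ x : LinearMap.ker r, p x.1.1 = 0 := fun x => by
    rw [← hr, show r x.1 = 0 from x.2, map_zero]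
  obtain ⟨g1, hg1⟩ := H1 S r hrs (f ∘ₗ LinearMap.codRestrict (LinearMap.ker p)
    (S.subtype ∘ₗ (LinearMap.ker r).subtype) hkr)
  obtain ⟨g, hg⟩ := H2 P (v ∘ₗ p) (hv.comp hp) g1
  refine ⟨g, fun x => ?_⟩
  have hx : p x.1 = 0 := x.2
  have hxS : x.1 ∈ S := by simp [S, hx]
  have hxr : r ⟨x.1, hxS⟩ = 0 := hi (by rw [hr, map_zero]; exact hx)
  rw [hg ⟨x.1, hxS⟩, hg1 ⟨⟨x.1, hxS⟩, hxr⟩]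
  rfl

theorem extVan_mid_right {M N' N N'' : Type} [AddCommGroup M] [Module R M] [AddCommGroup N']
    [Module R N'] [AddCommGroup N] [Module R N] [AddCommGroup N''] [Module R N'']
    (i : N' →ₗ[R] N) (hi : Function.Injective i) (v : N →ₗ[R] N'') (hv : Function.Surjective v)
    (hiv : Function.Exact i v) (H1 : ExtVan R M N') (H2 : ExtVan R M N'') : ExtVan R M N := by
  let p : (M →₀ R) →ₗ[R] M := Finsupp.linearCombination R id
  have hp : Function.Surjective p := Finsupp.linearCombination_id_surjective R M
  refine extVan_of_proj p hp (fun f => ?_)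
  obtain ⟨g2, hg2⟩ := H2 _ p hp (v ∘ₗ f)
  obtain ⟨g, hg⟩ := Module.projective_lifting_property v g2 hv
  have hg' : ∀ x, v (g x) = g2 x := fun x => LinearMap.congr_fun hg x
  have hk : ∀ x, (f - g ∘ₗ (LinearMap.ker p).subtype) x ∈ LinearMap.range i := fun x =>
    (hiv _).1 (by
      have := hg2 x
      simp [hg', this])
  obtain ⟨g1, hg1⟩ := H1 _ p hp ((LinearEquiv.ofInjective i hi).symm.toLinearMap ∘ₗ
    (LinearMap.codRestrict (LinearMap.range i) _ hk))
  have hr : ∀ x : LinearMap.ker p, i (g1 x) = f x - g x := by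
    intro x
    rw [hg1]
    have := LinearEquiv.apply_symm_apply (LinearEquiv.ofInjective i hi) ⟨_, hk x⟩
    exact congrArg Subtype.val this
  refine ⟨g + i ∘ₗ g1, fun x => ?_⟩
  simp [hr]

theorem extVan_pow_left {M N : Type} [AddCommGroup M] [Module R M]
    [AddCommGroup N] [Module R N] (n : ℕ) (H : ExtVan R M N) : ExtVan R (Fin n → M) N := by
  let p : (M →₀ R) →ₗ[R] M := Finsupp.linearCombination R id
  have hp : Function.Surjective p := Finsupp.linearCombination_id_surjective R M
  let pp : (Fin n →₀ (M →₀ R)) →ₗ[R] (Fin n → M) :=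
    LinearMap.pi (fun j => p ∘ₗ Finsupp.lapply j)
  have hpp : ∀ x j, pp x j = p (x j) := fun x j => rfl
  refine extVan_of_proj (P := Fin n →₀ (M →₀ R)) pp (fun m => ?_) (fun f => ?_)
  · choose x hx using fun j => hp (m j)
    exact ⟨Finsupp.equivFunOnFinite.symm x, funext fun j => by rw [hpp]; simp [hx]⟩
  · have key : ∀ j (x : LinearMap.ker p), pp (Finsupp.lsingle (R := R) j x.1) = 0 := by
      intro j x
      funext l
      rw [hpp]
      have hx : p x.1 = 0 := x.2
      by_cases h : j = l
      · subst h; simp [hx]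
      · simp [Finsupp.single_apply, h]
    choose g hg using fun j => H _ p hp (f ∘ₗ LinearMap.codRestrict (LinearMap.ker pp)
      ((Finsupp.lsingle j) ∘ₗ (LinearMap.ker p).subtype) (key j))
    refine ⟨∑ j, g j ∘ₗ Finsupp.lapply j, fun x => ?_⟩
    have hxj : ∀ j, p (x.1 j) = 0 := fun j => by
      rw [← hpp, show pp x.1 = 0 from x.2]; rfl
    have hx : x = ∑ j, (⟨Finsupp.lsingle (R := R) j (x.1 j), key j ⟨x.1 j, hxj j⟩⟩ : LinearMap.ker pp) := by
      apply Subtype.ext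
      rw [AddSubmonoidClass.coe_finsetSum]
      simp
    conv_rhs => rw [hx, map_sum]
    simp only [LinearMap.sum_apply, LinearMap.comp_apply, Finsupp.lapply_apply]
    refine Finset.sum_congr rfl fun j _ => ?_
    rw [hg j ⟨x.1 j, hxj j⟩]
    rfl

theorem extVan_pow_right {M N : Type} [AddCommGroup M] [Module R M]
    [AddCommGroup N] [Module R N] (n : ℕ) (H : ExtVan R M N) : ExtVan R M (Fin n → N) := by
  intro P _ _ p hp f
  choose g hg using fun j => H P p hp (LinearMap.proj j ∘ₗ f)
  exact ⟨LinearMap.pi g, fun x => funext fun j => hg j x⟩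

theorem extVan_equiv_right {M N N' : Type} [AddCommGroup M] [Module R M]
    [AddCommGroup N] [Module R N] [AddCommGroup N'] [Module R N'] (e : N ≃ₗ[R] N')
    (H : ExtVan R M N) : ExtVan R M N' := by
  intro P _ _ p hp f
  obtain ⟨g, hg⟩ := H P p hp (e.symm.toLinearMap ∘ₗ f)
  exact ⟨e.toLinearMap ∘ₗ g, fun x => by simp [hg]⟩

theorem extVan_equiv_left {M N M' : Type} [AddCommGroup M] [Module R M]
    [AddCommGroup N] [Module R N] [AddCommGroup M'] [Module R M'] (e : M ≃ₗ[R] M')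
    (H : ExtVan R M N) : ExtVan R M' N := by
  intro P _ _ p hp f
  obtain ⟨g, hg⟩ := H P (e.symm.toLinearMap ∘ₗ p) (e.symm.surjective.comp hp)
    (f ∘ₗ LinearMap.codRestrict (LinearMap.ker p)
      (LinearMap.ker (e.symm.toLinearMap ∘ₗ p)).subtype (fun x => by
        have := x.2
        simpa using this))
  refine ⟨g, fun x => ?_⟩
  rw [hg ⟨x.1, by have := x.2; simpa using this⟩]
  rfl

end ExtVan

theorem extVan_ext (k : Type) [Field k] (A : Type) [Ring A] [Algebra k A]
    (M N : ModuleCat.{0} Aᵐᵒᵖ) (H : ExtVan Aᵐᵒᵖ M N) : Subsingleton (rext1 k A M N) := by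
  let P : ProjectiveResolution M := projectiveResolution M
  have hz : Limits.IsZero ((P.complex.linearYonedaObj k N).homology 1) := by
    rw [← HomologicalComplex.exactAt_iff_isZero_homology,
      HomologicalComplex.exactAt_iff' _ 0 1 2 (by simp) (by simp),
      ShortComplex.moduleCat_exact_iff]
    intro (x : P.complex.X 1 ⟶ N) hx
    have hx' : P.complex.d 2 1 ≫ x = 0 := hx
    have ex0 : (ShortComplex.mk (P.complex.d 1 0) (P.π.f 0) P.complex_d_comp_π_f_zero).Exact :=
      ShortComplex.exact_of_g_is_cokernel _ P.isColimitCokernelCofork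
    have ex1 := P.exact_succ 0
    rw [ShortComplex.moduleCat_exact_iff] at ex0 ex1
    have hs : Function.Surjective (P.π.f 0) := by
      rw [← ModuleCat.epi_iff_surjective]; infer_instance
    have hd : ∀ y, (P.π.f 0) (P.complex.d 1 0 y) = 0 := by
      intro y
      have h := P.complex_d_comp_π_f_zero
      exact LinearMap.congr_fun (congrArg ModuleCat.Hom.hom h) y
    let p : P.complex.X 0 →ₗ[Aᵐᵒᵖ] M := (P.π.f 0).hom
    let d : P.complex.X 1 →ₗ[Aᵐᵒᵖ] LinearMap.ker p :=
      LinearMap.codRestrict (LinearMap.ker p) (P.complex.d 1 0).hom hd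
    obtain ⟨f, hf⟩ := factor_surj d (fun y => by
      obtain ⟨z, hz⟩ := ex0 y.1 y.2
      exact ⟨z, Subtype.ext hz⟩) x.hom (fun y hy => by
        obtain ⟨z, hz⟩ := ex1 y (congrArg Subtype.val hy)
        rw [← hz]
        exact LinearMap.congr_fun (congrArg ModuleCat.Hom.hom hx') z)
    obtain ⟨g, hg⟩ := H _ p hs f
    refine ⟨ModuleCat.ofHom g, ?_⟩
    change P.complex.d 1 0 ≫ ModuleCat.ofHom g = x
    ext y
    have := hg (d y)
    rw [hf] at this
    exact this
  exact ModuleCat.subsingleton_of_isZero (hz.of_iso (P.isoExt (R := k) 1 N))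

/-! ### Part 3: the algebraic assembly -/

section Assembly

variable {A : Type} [Ring A] {e : A}

theorem mem_genIdeal (b : A) : b * e ∈ genIdeal e := Submodule.subset_span ⟨b, rfl⟩

theorem mul_mem_genIdeal (a x : A) (hx : x ∈ genIdeal e) : a * x ∈ genIdeal e := by
  refine Submodule.span_induction (p := fun x _ => a * x ∈ genIdeal e) ?_ ?_ ?_ ?_ hx
  · rintro _ ⟨b, rfl⟩
    rw [← mul_assoc]; exact mem_genIdeal _
  · simp
  · intro x y _ _ h1 h2
    rw [mul_add]; exact Submodule.add_mem _ h1 h2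
  · intro c x _ h
    have : a * (c • x) = c • (a * x) := by
      simp [MulOpposite.smul_eq_mul_unop, mul_assoc]
    rw [this]; exact Submodule.smul_mem _ _ h

theorem jTriv_of_e {M : Type} [AddCommGroup M] [Module Aᵐᵒᵖ M]
    (h : ∀ m : M, MulOpposite.op e • m = 0) : JTriv e M := by
  intro a ha
  refine Submodule.span_induction (p := fun a _ => ∀ m : M, MulOpposite.op a • m = 0) ?_ ?_ ?_ ?_ ha
  · rintro _ ⟨b, rfl⟩ m
    rw [MulOpposite.op_mul, mul_smul, h]
  · simp
  · intro x y _ _ h1 h2 m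
    rw [MulOpposite.op_add, add_smul, h1, h2, add_zero]
  · intro c x _ h m
    have : MulOpposite.op (c • x) = c * MulOpposite.op x := by
      simp [MulOpposite.smul_eq_mul_unop]
    rw [this, mul_smul, h, smul_zero]

theorem e_of_jTriv {M : Type} [AddCommGroup M] [Module Aᵐᵒᵖ M]
    (h : JTriv e M) (m : M) : MulOpposite.op e • m = 0 :=
  h e (by simpa using mem_genIdeal (e := e) 1) m

theorem jTriv_quot : JTriv e (A ⧸ genIdeal e) := by
  apply jTriv_of_e
  intro m
  obtain ⟨b, rfl⟩ := (genIdeal e).mkQ_surjective m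
  rw [← map_smul, Submodule.mkQ_apply, Submodule.Quotient.mk_eq_zero]
  exact mem_genIdeal b

theorem hom_genIdeal_eq_zero (he : IsIdempotentElem e) {M : Type} [AddCommGroup M] [Module Aᵐᵒᵖ M]
    (h : JTriv e M) (g : genIdeal e →ₗ[Aᵐᵒᵖ] M) (x : genIdeal e) : g x = 0 := by
  obtain ⟨x, hx⟩ := x
  refine Submodule.span_induction (p := fun x hx => g ⟨x, hx⟩ = 0) ?_ ?_ ?_ ?_ hx
  · rintro _ ⟨b, rfl⟩
    have : (⟨b * e, mem_genIdeal b⟩ : genIdeal e) = MulOpposite.op e • ⟨b * e, mem_genIdeal b⟩ := by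
      apply Subtype.ext
      change b * e = b * e * e
      rw [mul_assoc, he.eq]
    rw [this, map_smul, e_of_jTriv h]
  · exact map_zero g
  · intro x y hx hy h1 h2
    have := map_add g ⟨x, hx⟩ ⟨y, hy⟩
    rw [h1, h2, add_zero] at this
    exact this
  · intro c x hx h
    have := map_smul g c ⟨x, hx⟩
    rw [h, smul_zero] at this
    exact this

theorem extVan_JJ (he : IsIdempotentElem e) (h : ExtVan Aᵐᵒᵖ (genIdeal e) A) :
    ExtVan Aᵐᵒᵖ (genIdeal e) (genIdeal e) := by
  intro P _ _ p hp f
  obtain ⟨g, hg⟩ := h P p hp ((genIdeal e).subtype ∘ₗ f)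
  obtain ⟨t, ht⟩ := factor_surj p hp ((genIdeal e).mkQ ∘ₗ g) (fun x hx => by
    have := hg ⟨x, hx⟩
    simp only at this
    simp only [LinearMap.comp_apply, this]
    simp)
  have : ∀ x, g x ∈ genIdeal e := fun x => by
    have h1 := ht x
    rw [hom_genIdeal_eq_zero he jTriv_quot] at h1
    simpa using h1.symm
  exact ⟨LinearMap.codRestrict _ g this, fun x => Subtype.ext (hg x)⟩

theorem extVan_YB (he : IsIdempotentElem e) (Y : ModuleCat.{0} Aᵐᵒᵖ) (hYtriv : JTriv e Y)
    (hYCM : ∀ (E : ModuleCat.{0} Aᵐᵒᵖ) (u : (A ⧸ genIdeal e) →ₗ[Aᵐᵒᵖ] E)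
      (v : E →ₗ[Aᵐᵒᵖ] Y), JTriv e E → Function.Injective u → Function.Surjective v →
      Function.Exact u v → ∃ s : Y →ₗ[Aᵐᵒᵖ] E, v ∘ₗ s = LinearMap.id) :
    ExtVan Aᵐᵒᵖ Y (A ⧸ genIdeal e) := by
  refine extVan_of_split fun E u v hu hv huv => hYCM E u v ?_ hu hv huv
  apply jTriv_of_e
  intro m
  obtain ⟨b, hb⟩ := (huv (MulOpposite.op e • m)).1 (by rw [map_smul, e_of_jTriv hYtriv])
  have : MulOpposite.op e • m = MulOpposite.op e • (MulOpposite.op e • m) := by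
    rw [smul_smul, ← MulOpposite.op_mul, he.eq]
  rw [this, ← hb, ← map_smul, e_of_jTriv jTriv_quot, map_zero]

theorem assembly (k : Type) [Field k] [Algebra k A] [FiniteDimensional k A]
    (he : IsIdempotentElem e)
    (Y : ModuleCat.{0} Aᵐᵒᵖ) [Module.Finite Aᵐᵒᵖ Y] (hYtriv : JTriv e Y)
    (h1 : ExtVan Aᵐᵒᵖ (genIdeal e) A) (h2 : ExtVan Aᵐᵒᵖ (genIdeal e) (A ⧸ genIdeal e))
    (h3 : ExtVan Aᵐᵒᵖ (genIdeal e) Y) (h4 : ExtVan Aᵐᵒᵖ Y (A ⧸ genIdeal e)) :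
    ∃ (JX X : ModuleCat.{0} Aᵐᵒᵖ) (f : JX →ₗ[Aᵐᵒᵖ] X) (g : X →ₗ[Aᵐᵒᵖ] Y),
      Function.Injective f ∧ Function.Surjective g ∧ Function.Exact f g ∧
      IsAddJApprox e JX X f ∧
      IsCM k A X ∧
      Subsingleton (rext1 k A (ModuleCat.of Aᵐᵒᵖ ↥(genIdeal e)) X) ∧
      Subsingleton (rext1 k A X (ModuleCat.of Aᵐᵒᵖ ↥(genIdeal e))) ∧
      Nonempty ((X ⧸ LinearMap.range f) ≃ₗ[Aᵐᵒᵖ] Y) := by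
  have h0 := extVan_JJ he h1
  obtain ⟨m, p, hp⟩ := Module.Finite.exists_fin' Aᵐᵒᵖ Y
  have : FiniteDimensional k Aᵐᵒᵖ := Module.Finite.equiv (MulOpposite.opLinearEquiv k (M := A))
  have : IsScalarTower k Aᵐᵒᵖ A := inferInstance
  obtain ⟨n, F, hF⟩ : ∃ (n : ℕ) (F : LinearMap.ker p →ₗ[Aᵐᵒᵖ] (Fin n → genIdeal e)),
      ∀ h : LinearMap.ker p →ₗ[Aᵐᵒᵖ] genIdeal e,
        ∃ c : (Fin n → genIdeal e) →ₗ[Aᵐᵒᵖ] genIdeal e, ∀ l, h l = c (F l) := by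
    have : FiniteDimensional k (LinearMap.ker p) := 
      FiniteDimensional.finiteDimensional_submodule ((LinearMap.ker p).restrictScalars k)
    have : FiniteDimensional k (genIdeal e) := 
      FiniteDimensional.finiteDimensional_submodule ((genIdeal e).restrictScalars k)
    have : Module.Finite k (LinearMap.ker p →ₗ[Aᵐᵒᵖ] genIdeal e) := by
      refine Module.Finite.of_injective (LinearMap.restrictScalarsₗ k Aᵐᵒᵖ _ _ k) ?_
      intro f g h
      ext x
      exact congrArg Subtype.val (LinearMap.congr_fun h x)
    obtain ⟨n, b, hb⟩ := Module.Finite.exists_fin' k (LinearMap.ker p →ₗ[Aᵐᵒᵖ] genIdeal e)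
    refine ⟨n, LinearMap.pi (fun j => b (Pi.single j 1)), fun h => ?_⟩
    obtain ⟨a, rfl⟩ := hb h
    refine ⟨∑ j, a j • LinearMap.proj j, fun l => ?_⟩
    have : b a = ∑ j, a j • b (Pi.single j 1) := by
      conv_lhs => rw [pi_eq_sum_univ' a]
      rw [map_sum]
      refine Finset.sum_congr rfl fun j _ => ?_
      rw [← map_smul]
    rw [this]
    simp
  obtain ⟨X, u, v, w, hu, hv, huv, hvw, hw⟩ := pushout_ext p hp F
  have hXJ : ExtVan Aᵐᵒᵖ X (genIdeal e) := by
    intro Q _ _ q hq f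
    let S := LinearMap.ker (v ∘ₗ q)
    obtain ⟨r, hr⟩ := range_lift u hu (q ∘ₗ S.subtype) (fun x => (huv _).1 x.2)
    have hr' : ∀ x, u (r x) = q x := hr
    have hrs : Function.Surjective r := by
      intro m
      obtain ⟨x, hx⟩ := hq (u m)
      refine ⟨⟨x, ?_⟩, hu ?_⟩
      · simp only [S, LinearMap.mem_ker, LinearMap.comp_apply, hx]
        exact (huv _).2 ⟨m, rfl⟩
      · rw [hr]; exact hx
    have hkr : ∀ x : LinearMap.ker r, q x.1.1 = 0 := fun x => by
      rw [← hr', show r x.1 = 0 from x.2, map_zero]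
    obtain ⟨g1, hg1⟩ := extVan_pow_left n h0 S r hrs (f ∘ₗ LinearMap.codRestrict (LinearMap.ker q)
      (S.subtype ∘ₗ (LinearMap.ker r).subtype) hkr)
    obtain ⟨a, ha⟩ := Module.projective_lifting_property q w hq
    have ha' : ∀ x, q (a x) = w x := fun x => LinearMap.congr_fun ha x
    let aL : LinearMap.ker p →ₗ[Aᵐᵒᵖ] S := LinearMap.codRestrict S (a ∘ₗ (LinearMap.ker p).subtype)
      (fun x => by
        have hx : p x.1 = 0 := x.2
        simp [S, ha', hvw, hx])
    have hraL : ∀ x, r (aL x) = F x := fun x => hu (by rw [hr', ← hw]; exact ha' _)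
    obtain ⟨c, hc⟩ := hF (g1 ∘ₗ aL)
    obtain ⟨g, hg⟩ := extend_along p hp (v ∘ₗ q) a (fun x => by simp [ha', hvw]) (g1 - c ∘ₗ r) 0
      (fun x hx => by
        have e1 := hc ⟨x, hx⟩
        rw [← hraL] at e1
        exact (sub_eq_zero.2 e1).symm)
    refine ⟨g, fun x => ?_⟩
    have hx : q x.1 = 0 := x.2
    have hxS : x.1 ∈ S := by simp [S, hx]
    have hxr : r ⟨x.1, hxS⟩ = 0 := hu (by rw [hr', map_zero]; exact hx)
    rw [hg ⟨x.1, hxS⟩, LinearMap.sub_apply, LinearMap.comp_apply, hxr, map_zero, sub_zero,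
      hg1 ⟨⟨x.1, hxS⟩, hxr⟩]
    rfl
  have hXB : ExtVan Aᵐᵒᵖ X (A ⧸ genIdeal e) :=
    extVan_mid_left u hu v hv huv (extVan_pow_left n h2) h4
  have hXA : ExtVan Aᵐᵒᵖ X A :=
    extVan_mid_right (genIdeal e).subtype (Submodule.subtype_injective _) (genIdeal e).mkQ
      (Submodule.mkQ_surjective _) (LinearMap.exact_subtype_mkQ _) hXJ hXB
  have hJX : ExtVan Aᵐᵒᵖ (genIdeal e) X :=
    extVan_mid_right u hu v hv huv (extVan_pow_right n h0) h3
  refine ⟨ModuleCat.of Aᵐᵒᵖ (Fin n → genIdeal e), X, u, v, hu, hv, huv, ?_, ?_, ?_, ?_, ?_⟩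
  · refine ⟨⟨n, LinearMap.id, LinearMap.id, rfl⟩, ?_⟩
    rintro Z ⟨n', s, r, hsr⟩ g
    have hz : ∀ z, v (g z) = 0 := by
      intro z
      have hsr' : r (s z) = z := LinearMap.congr_fun hsr z
      have : ∀ y, v (g (r y)) = 0 := by
        intro y
        have hy : y = ∑ j, LinearMap.single Aᵐᵒᵖ (fun _ : Fin n' => genIdeal e) j (y j) := by
          simp [Finset.univ_sum_single]
        rw [hy]
        simp only [map_sum]
        refine Finset.sum_eq_zero fun j _ => ?_
        exact hom_genIdeal_eq_zero he hYtriv (v ∘ₗ g ∘ₗ r ∘ₗ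
          LinearMap.single Aᵐᵒᵖ (fun _ : Fin n' => genIdeal e) j) (y j)
      rw [← hsr', this]
    obtain ⟨h, hh⟩ := range_lift u hu g (fun z => (huv _).1 (hz z))
    exact ⟨h, LinearMap.ext hh⟩
  · exact extVan_ext k A X (ModuleCat.of Aᵐᵒᵖ A) hXA
  · exact extVan_ext k A (ModuleCat.of Aᵐᵒᵖ _) X hJX
  · exact extVan_ext k A X (ModuleCat.of Aᵐᵒᵖ _) hXJ
  · have hr : LinearMap.range u = LinearMap.ker v := by
      ext x; exact (huv x).symm
    exact ⟨(Submodule.quotEquivOfEq _ _ hr).trans (v.quotKerEquivOfSurjective hv)⟩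

end Assembly

/-! ### Part 4: the triangulated category -/

theorem fin_span {k V : Type} [Field k] [AddCommGroup V] [Module k V] (h : FiniteDimensional k V) :
    ∃ (n : ℕ) (v : Fin n → V), ∀ x, ∃ a : Fin n → k, x = ∑ j, a j • v j := by
  obtain ⟨n, b, hb⟩ := Module.Finite.exists_fin' k V
  refine ⟨n, fun j => b (Pi.single j 1), fun x => ?_⟩
  obtain ⟨a, rfl⟩ := hb x
  refine ⟨a, ?_⟩
  conv_lhs => rw [pi_eq_sum_univ' a]
  rw [map_sum]
  refine Finset.sum_congr rfl fun j _ => ?_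
  rw [← map_smul]

/-- `X` is a direct summand of a finite direct sum of copies of `S`. -/
def InAdd {C : Type} [Category.{0} C] [Preadditive C] (S X : C) : Prop :=
  ∃ (n : ℕ) (s : Fin n → (X ⟶ S)) (r : Fin n → (S ⟶ X)), ∑ j, s j ≫ r j = 𝟙 X

section Cat

set_option linter.unusedSectionVars false
set_option linter.unusedVariables false

variable {k : Type} [Field k] {C : Type} [Category.{0} C] [Preadditive C] [Linear k C]
  [HasShift C ℤ] [Limits.HasZeroObject C] [∀ n : ℤ, (shiftFunctor C n).Additive]
  [Pretriangulated C] [Limits.HasFiniteBiproducts C]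

open Pretriangulated

section Tri

variable {X Y Z W : C} {a : X ⟶ Y} {b : Y ⟶ Z} {c : Z ⟶ X⟦(1:ℤ)⟧}

theorem tri_co1 (hd : Triangle.mk a b c ∈ distTriang C) (f : W ⟶ X⟦(1:ℤ)⟧)
    (hf : f ≫ a⟦(1:ℤ)⟧' = 0) : ∃ g : W ⟶ Z, f = g ≫ c := Triangle.coyoneda_exact₁ _ hd f hf

theorem tri_co2 (hd : Triangle.mk a b c ∈ distTriang C) (f : W ⟶ Y)
    (hf : f ≫ b = 0) : ∃ g : W ⟶ X, f = g ≫ a := Triangle.coyoneda_exact₂ _ hd f hf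

theorem tri_co3 (hd : Triangle.mk a b c ∈ distTriang C) (f : W ⟶ Z)
    (hf : f ≫ c = 0) : ∃ g : W ⟶ Y, f = g ≫ b := Triangle.coyoneda_exact₃ _ hd f hf

theorem tri_y2 (hd : Triangle.mk a b c ∈ distTriang C) (f : Y ⟶ W)
    (hf : a ≫ f = 0) : ∃ g : Z ⟶ W, f = b ≫ g := Triangle.yoneda_exact₂ _ hd f hf

theorem tri_y3 (hd : Triangle.mk a b c ∈ distTriang C) (f : Z ⟶ W)
    (hf : b ≫ f = 0) : ∃ g : X⟦(1:ℤ)⟧ ⟶ W, f = c ≫ g := Triangle.yoneda_exact₃ _ hd f hf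

theorem tri_z12 (hd : Triangle.mk a b c ∈ distTriang C) : a ≫ b = 0 :=
  comp_distTriang_mor_zero₁₂ _ hd

theorem tri_z23 (hd : Triangle.mk a b c ∈ distTriang C) : b ≫ c = 0 :=
  comp_distTriang_mor_zero₂₃ _ hd

theorem tri_z31 (hd : Triangle.mk a b c ∈ distTriang C) : c ≫ a⟦(1:ℤ)⟧' = 0 :=
  comp_distTriang_mor_zero₃₁ _ hd

end Tri

theorem inAdd_biproduct (S : C) (n : ℕ) : InAdd S (⨁ (fun _ : Fin n => S)) :=
  ⟨n, fun j => Limits.biproduct.π (fun _ => S) j, fun j => Limits.biproduct.ι (fun _ => S) j, Limits.biproduct.total⟩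

theorem inAdd_zero_left {S P X : C} (h : InAdd S P) (h0 : ∀ f : S ⟶ X, f = 0) (f : P ⟶ X) :
    f = 0 := by
  obtain ⟨n, s, r, hsr⟩ := h
  rw [← Category.id_comp f, ← hsr, Preadditive.sum_comp]
  refine Finset.sum_eq_zero fun j _ => ?_
  rw [Category.assoc, h0 (r j ≫ f), Limits.comp_zero]

theorem inAdd_zero_right {S P X : C} (h : InAdd S P) (h0 : ∀ f : X ⟶ S, f = 0) (f : X ⟶ P) :
    f = 0 := by
  obtain ⟨n, s, r, hsr⟩ := h
  rw [← Category.comp_id f, ← hsr, Preadditive.comp_sum]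
  refine Finset.sum_eq_zero fun j _ => ?_
  rw [← Category.assoc, h0 (f ≫ s j), Limits.zero_comp]

theorem inAdd_shift {S P : C} (h : InAdd S P) : InAdd (S⟦(1:ℤ)⟧) (P⟦(1:ℤ)⟧) := by
  obtain ⟨n, s, r, hsr⟩ := h
  refine ⟨n, fun j => (s j)⟦1⟧', fun j => (r j)⟦1⟧', ?_⟩
  have := congrArg (fun f => f⟦(1:ℤ)⟧') hsr
  simpa [Functor.map_sum] using this

theorem shift_zero {X Y : C} (h : ∀ f : X ⟶ Y, f = 0) (f : X⟦(1:ℤ)⟧ ⟶ Y⟦(1:ℤ)⟧) : f = 0 := by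
  obtain ⟨g, rfl⟩ := (shiftFunctor C (1:ℤ)).map_surjective f
  rw [h g, Functor.map_zero]

theorem right_approx (hfin : ∀ X Y : C, FiniteDimensional k (X ⟶ Y)) (S X : C) :
    ∃ (P : C) (r : P ⟶ X), InAdd S P ∧ ∀ f : S ⟶ X, ∃ g : S ⟶ P, f = g ≫ r := by
  obtain ⟨n, v, hv⟩ := fin_span (hfin S X)
  refine ⟨_, Limits.biproduct.desc v, inAdd_biproduct S n, fun f => ?_⟩
  obtain ⟨a, ha⟩ := hv f
  refine ⟨∑ j, a j • Limits.biproduct.ι (fun _ => S) j, ?_⟩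
  rw [Preadditive.sum_comp, ha]
  simp

theorem left_approx (hfin : ∀ X Y : C, FiniteDimensional k (X ⟶ Y)) (S X : C) :
    ∃ (P : C) (l : X ⟶ P), InAdd S P ∧ ∀ f : X ⟶ S, ∃ g : P ⟶ S, f = l ≫ g := by
  obtain ⟨n, v, hv⟩ := fin_span (hfin X S)
  refine ⟨_, Limits.biproduct.lift v, inAdd_biproduct S n, fun f => ?_⟩
  obtain ⟨a, ha⟩ := hv f
  refine ⟨∑ j, a j • Limits.biproduct.π (fun _ => S) j, ?_⟩
  rw [Preadditive.comp_sum, ha]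
  simp

theorem inAdd_self (S : C) : InAdd S S := ⟨1, fun _ => 𝟙 S, fun _ => 𝟙 S, by simp⟩

theorem ct_rigid {T : C} (ct : ∀ X : C, (∀ f : T ⟶ X⟦(1:ℤ)⟧, f = 0) ↔ InAdd T X) :
    ∀ f : T ⟶ T⟦(1:ℤ)⟧, f = 0 := (ct T).2 (inAdd_self T)

theorem ct_pres (hfin : ∀ X Y : C, FiniteDimensional k (X ⟶ Y)) {T : C}
    (ct : ∀ X : C, (∀ f : T ⟶ X⟦(1:ℤ)⟧, f = 0) ↔ InAdd T X) (W : C) :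
    ∃ (T1 T0 : C) (a : T1 ⟶ T0) (b : T0 ⟶ W) (c : W ⟶ T1⟦(1:ℤ)⟧),
      Triangle.mk a b c ∈ distTriang C ∧ InAdd T T1 ∧ InAdd T T0 ∧
      ∀ f : T ⟶ W, ∃ g : T ⟶ T0, f = g ≫ b := by
  obtain ⟨T0, b, hT0, hb⟩ := right_approx hfin T W
  obtain ⟨T1, a, c, hd⟩ := distinguished_cocone_triangle₁ b
  refine ⟨T1, T0, a, b, c, hd, (ct T1).1 fun f => ?_, hT0, hb⟩
  obtain ⟨g, hg⟩ := tri_co1 hd f ((ct T0).2 hT0 _)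
  obtain ⟨g', rfl⟩ := hb g
  rw [hg, Category.assoc, tri_z23 hd, Limits.comp_zero]

theorem ct_faithful (hfin : ∀ X Y : C, FiniteDimensional k (X ⟶ Y)) {T : C}
    (ct : ∀ X : C, (∀ f : T ⟶ X⟦(1:ℤ)⟧, f = 0) ↔ InAdd T X) {Z : C}
    (g : Z ⟶ T⟦(1:ℤ)⟧⟦(1:ℤ)⟧) (hg : ∀ x : T ⟶ Z, x ≫ g = 0) : g = 0 := by
  obtain ⟨T1, T0, a, b, c, hd, hT1, hT0, -⟩ := ct_pres hfin ct Z
  obtain ⟨n, s, r, hsr⟩ := hT0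
  have hbg : b ≫ g = 0 := by
    rw [← Category.id_comp (b ≫ g), ← hsr, Preadditive.sum_comp]
    refine Finset.sum_eq_zero fun j _ => ?_
    have := hg (r j ≫ b)
    rw [Category.assoc] at this
    rw [Category.assoc, this, Limits.comp_zero]
  obtain ⟨h, hh⟩ := tri_y3 hd g hbg
  have : h = 0 := shift_zero (fun f => inAdd_zero_left hT1 (ct_rigid ct) f) h
  rw [hh, this, Limits.comp_zero]

theorem serre_dim (hfin : ∀ X Y : C, FiniteDimensional k (X ⟶ Y))
    (serre : ∀ X Y : C, Nonempty ((X ⟶ Y) ≃ₗ[k] Module.Dual k (Y ⟶ X⟦(2:ℤ)⟧))) (X Y : C) :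
    Module.finrank k (X ⟶ Y) = Module.finrank k (Y ⟶ X⟦(1:ℤ)⟧⟦(1:ℤ)⟧) := by
  obtain ⟨E⟩ := serre X Y
  rw [E.finrank_eq, Subspace.dual_finrank_eq]
  exact (Linear.homCongr k (Iso.refl Y)
    ((shiftFunctorAdd' C (1:ℤ) 1 2 (by norm_num)).app X)).finrank_eq

theorem serre_zero (hfin : ∀ X Y : C, FiniteDimensional k (X ⟶ Y))
    (serre : ∀ X Y : C, Nonempty ((X ⟶ Y) ≃ₗ[k] Module.Dual k (Y ⟶ X⟦(2:ℤ)⟧))) {X Y : C}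
    (h : ∀ f : X ⟶ Y, f = 0) (g : Y ⟶ X⟦(1:ℤ)⟧⟦(1:ℤ)⟧) : g = 0 := by
  have := hfin Y (X⟦(1:ℤ)⟧⟦(1:ℤ)⟧)
  have h1 := serre_dim hfin serre X Y
  have : Subsingleton (X ⟶ Y) := ⟨fun a b => by rw [h a, h b]⟩
  rw [Module.finrank_zero_of_subsingleton] at h1
  have := Module.finrank_zero_iff.1 h1.symm
  exact Subsingleton.elim _ _

theorem serre_symm (hfin : ∀ X Y : C, FiniteDimensional k (X ⟶ Y))
    (serre : ∀ X Y : C, Nonempty ((X ⟶ Y) ≃ₗ[k] Module.Dual k (Y ⟶ X⟦(2:ℤ)⟧))) {X Y : C}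
    (h : ∀ f : X ⟶ Y⟦(1:ℤ)⟧, f = 0) (g : Y ⟶ X⟦(1:ℤ)⟧) : g = 0 := by
  apply (shiftFunctor C (1:ℤ)).map_injective
  rw [Functor.map_zero]
  exact serre_zero hfin serre h _

end Cat

/-! ### Part 5: the functor `Hom(T, -)` to right modules -/

section HomFunctor

set_option linter.unusedSectionVars false
set_option linter.unusedVariables false

open Pretriangulated

variable {k : Type} [Field k] {C : Type} [Category.{0} C] [Preadditive C] [Linear k C]
  [HasShift C ℤ] [Limits.HasZeroObject C] [∀ n : ℤ, (shiftFunctor C n).Additive]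
  [Pretriangulated C] [Limits.HasFiniteBiproducts C]
  {A : Type} [Ring A] {T : C}

/-- The right `A`-module `Hom(T, X)`. -/
def HM (φ : A ≃+* End T) (X : C) : Type := T ⟶ X

instance (φ : A ≃+* End T) (X : C) : AddCommGroup (HM φ X) :=
  inferInstanceAs (AddCommGroup (T ⟶ X))

/-- A morphism as an element of the module. -/
def hmk (φ : A ≃+* End T) {X : C} (f : T ⟶ X) : HM φ X := f

/-- An element of the module as a morphism. -/
def hun (φ : A ≃+* End T) {X : C} (f : HM φ X) : T ⟶ X := f

theorem hmk_add (φ : A ≃+* End T) {X : C} (f g : T ⟶ X) : hmk φ (f + g) = hmk φ f + hmk φ g := rfl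
theorem hmk_sub (φ : A ≃+* End T) {X : C} (f g : T ⟶ X) : hmk φ (f - g) = hmk φ f - hmk φ g := rfl
theorem hmk_zero (φ : A ≃+* End T) {X : C} : hmk φ (0 : T ⟶ X) = 0 := rfl
theorem hmk_hun (φ : A ≃+* End T) {X : C} (f : HM φ X) : hmk φ (hun φ f) = f := rfl
theorem hun_hmk (φ : A ≃+* End T) {X : C} (f : T ⟶ X) : hun φ (hmk φ f) = f := rfl
theorem hmk_inj (φ : A ≃+* End T) {X : C} {f g : T ⟶ X} (h : hmk φ f = hmk φ g) : f = g := h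
theorem hmk_eq_zero (φ : A ≃+* End T) {X : C} {f : T ⟶ X} : hmk φ f = 0 ↔ f = 0 := Iff.rfl

theorem hmk_sum (φ : A ≃+* End T) {X : C} {n : ℕ} (f : Fin n → (T ⟶ X)) :
    hmk φ (∑ j, f j) = ∑ j, hmk φ (f j) :=
  map_sum (AddMonoidHom.mk' (hmk φ (X := X)) (fun _ _ => rfl)) f Finset.univ

/-- The endomorphism of `T` attached to an element of `A`. -/
def emo (φ : A ≃+* End T) (a : A) : T ⟶ T := φ a

theorem emo_mul (φ : A ≃+* End T) (a b : A) : emo φ (a * b) = emo φ b ≫ emo φ a := map_mul φ a b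
theorem emo_one (φ : A ≃+* End T) : emo φ 1 = 𝟙 T := map_one φ
theorem emo_zero (φ : A ≃+* End T) : emo φ 0 = 0 := map_zero φ
theorem emo_add (φ : A ≃+* End T) (a b : A) : emo φ (a + b) = emo φ a + emo φ b := map_add φ a b

/-- The element of `A` attached to an endomorphism of `T`. -/
def me (φ : A ≃+* End T) (t : T ⟶ T) : A := φ.symm t

theorem emo_me (φ : A ≃+* End T) (t : T ⟶ T) : emo φ (me φ t) = t := φ.apply_symm_apply t
theorem me_emo (φ : A ≃+* End T) (a : A) : me φ (emo φ a) = a := φ.symm_apply_apply a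
theorem me_comp (φ : A ≃+* End T) (s t : T ⟶ T) : me φ (s ≫ t) = me φ t * me φ s :=
  map_mul φ.symm (show End T from t) (show End T from s)
theorem me_zero (φ : A ≃+* End T) : me φ 0 = 0 := map_zero φ.symm
theorem me_add (φ : A ≃+* End T) (a b : T ⟶ T) : me φ (a + b) = me φ a + me φ b :=
  map_add φ.symm (show End T from a) (show End T from b)

instance (φ : A ≃+* End T) (X : C) : Module Aᵐᵒᵖ (HM φ X) where
  smul a f := emo φ a.unop ≫ hun φ f
  one_smul f := by
    change emo φ 1 ≫ hun φ f = f
    rw [emo_one, Category.id_comp]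
    rfl
  mul_smul a b f := by
    change emo φ (b.unop * a.unop) ≫ hun φ f = emo φ a.unop ≫ emo φ b.unop ≫ _
    rw [emo_mul, Category.assoc]
  smul_zero a := Limits.comp_zero
  smul_add a f g := Preadditive.comp_add _ _ _ _ _ _
  add_smul a b f := by
    change emo φ (a.unop + b.unop) ≫ hun φ f = emo φ a.unop ≫ _ + emo φ b.unop ≫ _
    rw [emo_add, Preadditive.add_comp]
    rfl
  zero_smul f := by
    change emo φ 0 ≫ hun φ f = _
    rw [emo_zero, Limits.zero_comp]
    rfl

theorem HM_smul (φ : A ≃+* End T) {X : C} (a : Aᵐᵒᵖ) (f : T ⟶ X) :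
    a • hmk φ f = hmk φ (emo φ a.unop ≫ f) := rfl

/-- Functoriality of `HM`. -/
def Hmap (φ : A ≃+* End T) {X Y : C} (g : X ⟶ Y) : HM φ X →ₗ[Aᵐᵒᵖ] HM φ Y where
  toFun f := hun φ f ≫ g
  map_add' f f' := Preadditive.add_comp _ _ _ _ _ _
  map_smul' a f := Category.assoc _ _ _

theorem Hmap_apply (φ : A ≃+* End T) {X Y : C} (g : X ⟶ Y) (f : T ⟶ X) :
    Hmap φ g (hmk φ f) = hmk φ (f ≫ g) := rfl

theorem HM_lin (φ : A ≃+* End T) {X : C} {M : Type} [AddCommGroup M] [Module Aᵐᵒᵖ M]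
    (f : HM φ X →ₗ[Aᵐᵒᵖ] M) (t : T ⟶ T) (x : T ⟶ X) :
    f (hmk φ (t ≫ x)) = MulOpposite.op (me φ t) • f (hmk φ x) := by
  rw [← map_smul, HM_smul, MulOpposite.unop_op, emo_me]

/-- `Hom(T, T)` is free of rank one. -/
def HMT (φ : A ≃+* End T) : A ≃ₗ[Aᵐᵒᵖ] HM φ T where
  toFun a := emo φ a
  invFun t := me φ t
  left_inv a := me_emo φ a
  right_inv t := emo_me φ t
  map_add' a b := emo_add φ a b
  map_smul' a b := emo_mul φ b a.unop

/-- The regular right module. -/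
def opEq (A : Type) [Ring A] : Aᵐᵒᵖ ≃ₗ[Aᵐᵒᵖ] A where
  toFun a := a.unop
  invFun t := MulOpposite.op t
  left_inv a := rfl
  right_inv t := rfl
  map_add' a b := rfl
  map_smul' a b := rfl

theorem HM_projT (φ : A ≃+* End T) : Module.Projective Aᵐᵒᵖ (HM φ T) :=
  Module.Projective.of_equiv ((opEq A).trans (HMT φ))

theorem HM_proj (φ : A ≃+* End T) {S P : C} (hS : Module.Projective Aᵐᵒᵖ (HM φ S))
    (h : InAdd S P) : Module.Projective Aᵐᵒᵖ (HM φ P) := by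
  obtain ⟨n, s, r, hsr⟩ := h
  refine Module.Projective.of_lifting_property'' fun f hf => ?_
  choose h hh using fun j => Module.projective_lifting_property f (Hmap φ (r j)) hf
  refine ⟨∑ j, h j ∘ₗ Hmap φ (s j), ?_⟩
  refine LinearMap.ext fun x => ?_
  rw [LinearMap.comp_apply, LinearMap.sum_apply, map_sum]
  have : ∀ j, f ((h j ∘ₗ Hmap φ (s j)) x) = hmk φ (hun φ x ≫ s j ≫ r j) := fun j => by
    have := LinearMap.congr_fun (hh j) (Hmap φ (s j) x)
    refine this.trans ?_
    change hmk φ ((hun φ x ≫ s j) ≫ r j) = _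
    rw [Category.assoc]
  rw [Finset.sum_congr rfl fun j _ => this j, ← hmk_sum, ← Preadditive.comp_sum, hsr,
    Category.comp_id]
  rfl

theorem HM_full (hfin : ∀ X Y : C, FiniteDimensional k (X ⟶ Y))
    (ct : ∀ X : C, (∀ f : T ⟶ X⟦(1:ℤ)⟧, f = 0) ↔ InAdd T X) (φ : A ≃+* End T) {W W' : C}
    (f : HM φ W →ₗ[Aᵐᵒᵖ] HM φ W') : ∃ g : W ⟶ W', ∀ x : T ⟶ W, f (hmk φ x) = hmk φ (x ≫ g) := by
  obtain ⟨T1, T0, a, b, c, hd, hT1, ⟨n, s, r, hsr⟩, hb⟩ := ct_pres hfin ct W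
  let F : (T ⟶ W) → (T ⟶ W') := fun x => hun φ (f (hmk φ x))
  have hF : ∀ (t : T ⟶ T) x, F (t ≫ x) = t ≫ F x := by
    intro t x
    change hun φ (f (hmk φ (t ≫ x))) = _
    rw [HM_lin]
    change emo φ (me φ t) ≫ F x = _
    rw [emo_me]
  have hFs : ∀ x : Fin n → (T ⟶ W), F (∑ j, x j) = ∑ j, F (x j) := fun x => by
    change hun φ (f (hmk φ _)) = _
    rw [hmk_sum, map_sum]
    rfl
  let w : T0 ⟶ W' := ∑ j, s j ≫ F (r j ≫ b)
  have hw : ∀ y : T ⟶ T0, y ≫ w = F (y ≫ b) := by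
    intro y
    have : y ≫ b = ∑ j, (y ≫ s j) ≫ (r j ≫ b) := by
      conv_lhs => rw [← Category.comp_id y, ← hsr]
      simp [Preadditive.comp_sum, Preadditive.sum_comp]
    rw [this, hFs, Preadditive.comp_sum]
    refine Finset.sum_congr rfl fun j _ => ?_
    rw [hF, Category.assoc]
  have haw : a ≫ w = 0 := by
    obtain ⟨n', s', r', hsr'⟩ := hT1
    rw [← Category.id_comp (a ≫ w), ← hsr', Preadditive.sum_comp]
    refine Finset.sum_eq_zero fun j _ => ?_
    have : r' j ≫ a ≫ w = 0 := by
      rw [← Category.assoc, hw, Category.assoc, tri_z12 hd, Limits.comp_zero]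
      exact map_zero f
    rw [Category.assoc, this, Limits.comp_zero]
  obtain ⟨g, hg⟩ := tri_y2 hd w haw
  refine ⟨g, fun x => ?_⟩
  obtain ⟨y, rfl⟩ := hb x
  rw [Category.assoc, ← hg, hw]
  rfl

/-- realisation of a module as `Hom(T, Z)`. -/
theorem HM_real (hfin : ∀ X Y : C, FiniteDimensional k (X ⟶ Y))
    (ct : ∀ X : C, (∀ f : T ⟶ X⟦(1:ℤ)⟧, f = 0) ↔ InAdd T X) (φ : A ≃+* End T) {T0 : C}
    {M : Type} [AddCommGroup M] [Module Aᵐᵒᵖ M]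
    (q : HM φ T0 →ₗ[Aᵐᵒᵖ] M) (hq : Function.Surjective q) :
    ∃ Z : C, Nonempty (M ≃ₗ[Aᵐᵒᵖ] HM φ Z) := by
  let L : Submodule k (T ⟶ T0) :=
    { carrier := {x | q (hmk φ x) = 0}
      add_mem' := fun {x y} hx hy => by
        have := map_add q (hmk φ x) (hmk φ y)
        rw [Set.mem_ofPred_eq] at hx hy ⊢
        rw [hx, hy, add_zero] at this
        exact this
      zero_mem' := map_zero q
      smul_mem' := fun c x hx => by
        rw [Set.mem_ofPred_eq] at hx ⊢
        have h : c • x = (c • 𝟙 T) ≫ x := by simp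
        rw [h]
        rw [HM_lin, hx, smul_zero] }
  have := hfin T T0
  obtain ⟨n, v, hv⟩ := fin_span (k := k) (V := L) inferInstance
  let z : (⨁ (fun _ : Fin n => T)) ⟶ T0 := Limits.biproduct.desc (fun j => (v j).1)
  obtain ⟨Z, b, c, hd⟩ := distinguished_cocone_triangle z
  have hT1 : InAdd T (⨁ (fun _ : Fin n => T)) := inAdd_biproduct T n
  have hb : ∀ x : T ⟶ Z, ∃ y : T ⟶ T0, x = y ≫ b := fun x =>
    tri_co3 hd x ((ct _).2 hT1 _)
  obtain ⟨u, hu⟩ := factor_surj q hq (Hmap φ b) (by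
    intro (x : T ⟶ T0) hx
    obtain ⟨a, ha⟩ := hv ⟨x, hx⟩
    have ha' : x = ∑ j, a j • (v j).1 := by
      have := congrArg Subtype.val ha
      simpa using this
    have hxz : x = (∑ j, a j • Limits.biproduct.ι (fun _ => T) j) ≫ z := by
      rw [Preadditive.sum_comp, ha']
      simp [z]
    change x ≫ b = 0
    rw [hxz, Category.assoc, tri_z12 hd, Limits.comp_zero])
  refine ⟨Z, ⟨LinearEquiv.ofBijective u ⟨?_, ?_⟩⟩⟩
  · rw [← LinearMap.ker_eq_bot, LinearMap.ker_eq_bot']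
    intro m hm
    obtain ⟨x, rfl⟩ := hq m
    rw [hu] at hm
    obtain ⟨y, hy⟩ := tri_co2 hd (hun φ x) hm
    have hy' : hun φ x ∈ L := by
      rw [hy]
      have : y ≫ z = ∑ j, (y ≫ Limits.biproduct.π (fun _ => T) j) ≫ (v j).1 := by
        conv_lhs => rw [← Category.comp_id y, ← Limits.biproduct.total, Preadditive.comp_sum,
          Preadditive.sum_comp]
        refine Finset.sum_congr rfl fun j _ => ?_
        simp [z]
      rw [this]
      refine Submodule.sum_mem _ fun j _ => ?_
      refine (HM_lin φ q _ _).trans ?_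
      rw [show q (hmk φ (v j).1) = 0 from (v j).2, smul_zero]
    exact hy'
  · intro (x : T ⟶ Z)
    obtain ⟨y, rfl⟩ := hb x
    exact ⟨q (hmk φ y), hu (hmk φ y)⟩

theorem HM_realFin (hfin : ∀ X Y : C, FiniteDimensional k (X ⟶ Y))
    (ct : ∀ X : C, (∀ f : T ⟶ X⟦(1:ℤ)⟧, f = 0) ↔ InAdd T X) (φ : A ≃+* End T)
    {M : Type} [AddCommGroup M] [Module Aᵐᵒᵖ M] (hM : Module.Finite Aᵐᵒᵖ M) :
    ∃ Z : C, Nonempty (M ≃ₗ[Aᵐᵒᵖ] HM φ Z) := by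
  obtain ⟨n, p, hp⟩ := Module.Finite.exists_fin' Aᵐᵒᵖ M
  let d : HM φ (⨁ (fun _ : Fin n => T)) →ₗ[Aᵐᵒᵖ] (Fin n → Aᵐᵒᵖ) :=
    LinearMap.pi (fun j => (opEq A).symm.toLinearMap ∘ₗ (HMT φ).symm.toLinearMap ∘ₗ
      Hmap φ (Limits.biproduct.π (fun _ => T) j))
  refine HM_real hfin ct φ (p ∘ₗ d) (hp.comp ?_)
  intro y
  refine ⟨hmk φ (Limits.biproduct.lift (fun j => emo φ (y j).unop)), ?_⟩
  funext j
  change MulOpposite.op (me φ (Limits.biproduct.lift (fun j => emo φ (y j).unop) ≫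
    Limits.biproduct.π (fun _ => T) j)) = y j
  rw [Limits.biproduct.lift_π, me_emo, MulOpposite.op_unop]

theorem HM_sep (hfin : ∀ X Y : C, FiniteDimensional k (X ⟶ Y))
    (serre : ∀ X Y : C, Nonempty ((X ⟶ Y) ≃ₗ[k] Module.Dual k (Y ⟶ X⟦(2:ℤ)⟧)))
    (ct : ∀ X : C, (∀ f : T ⟶ X⟦(1:ℤ)⟧, f = 0) ↔ InAdd T X) (φ : A ≃+* End T) {Z : C}
    (y : T ⟶ Z) (hy : ∀ g : Z ⟶ T⟦(1:ℤ)⟧⟦(1:ℤ)⟧, y ≫ g = 0) : y = 0 := by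
  let Y0 : Submodule Aᵐᵒᵖ (HM φ Z) :=
    ⨅ g : Z ⟶ T⟦(1:ℤ)⟧⟦(1:ℤ)⟧, LinearMap.ker (Hmap φ g)
  have hY0 : ∀ x : HM φ Z, x ∈ Y0 ↔ ∀ g : Z ⟶ T⟦(1:ℤ)⟧⟦(1:ℤ)⟧, Hmap φ g x = 0 := by
    intro x
    simp [Y0, Submodule.mem_iInf]
  obtain ⟨T1, T0, a, b, c, hd, -, -, hb⟩ := ct_pres hfin ct Z
  obtain ⟨Z', ⟨E⟩⟩ := HM_real hfin ct φ (Y0.mkQ ∘ₗ Hmap φ b)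
    (Y0.mkQ_surjective.comp (by
      intro (x : T ⟶ Z)
      obtain ⟨g, hg⟩ := hb x
      exact ⟨g, hg.symm⟩))
  obtain ⟨γ, hγ⟩ := HM_full hfin ct φ (E.toLinearMap ∘ₗ Y0.mkQ)
  have hγs : ∀ x : T ⟶ Z', ∃ x' : T ⟶ Z, x' ≫ γ = x := by
    intro x
    obtain ⟨m, hm⟩ := E.surjective x
    obtain ⟨x', rfl⟩ := Y0.mkQ_surjective m
    exact ⟨x', (hγ x').symm.trans hm⟩
  have hle : Module.finrank k (T ⟶ Z) ≤ Module.finrank k (T ⟶ Z') := by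
    rw [serre_dim hfin serre, serre_dim hfin serre T Z']
    have := hfin Z' (T⟦(1:ℤ)⟧⟦(1:ℤ)⟧)
    have hs : Function.Surjective (Linear.leftComp k (T⟦(1:ℤ)⟧⟦(1:ℤ)⟧) γ) := by
      intro g
      obtain ⟨u, hu⟩ := factor_surj (E.toLinearMap ∘ₗ Y0.mkQ)
        (E.surjective.comp Y0.mkQ_surjective) (Hmap φ g) (by
          intro x hx
          have : Y0.mkQ x = 0 := E.injective (hx.trans (map_zero E).symm)
          rw [Submodule.mkQ_apply, Submodule.Quotient.mk_eq_zero] at this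
          exact (hY0 x).1 this g)
      obtain ⟨g', hg'⟩ := HM_full hfin ct φ u
      refine ⟨g', ?_⟩
      change γ ≫ g' = g
      refine sub_eq_zero.1 (ct_faithful hfin ct _ fun x => ?_)
      rw [Preadditive.comp_sub, sub_eq_zero]
      have h1 := hu (hmk φ x)
      rw [hγ x, hg'] at h1
      rw [← Category.assoc]
      exact h1
    exact LinearMap.finrank_le_finrank_of_surjective hs
  have f1 := hfin T Z
  have f2 := hfin T Z'
  have hs : Function.Surjective (Linear.rightComp k T γ) := fun x => hγs x
  have hge := LinearMap.finrank_le_finrank_of_surjective hs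
  have hinj := (LinearMap.injective_iff_surjective_of_finrank_eq_finrank (le_antisymm hle hge)).2 hs
  apply hinj
  rw [map_zero]
  change hmk φ (y ≫ γ) = 0
  rw [← hγ y]
  have : Y0.mkQ (hmk φ y) = 0 := by
    rw [Submodule.mkQ_apply, Submodule.Quotient.mk_eq_zero, hY0]
    exact hy
  change E (Y0.mkQ (hmk φ y)) = _
  rw [this]
  exact map_zero E

end HomFunctor

/-! ### Part 6: the extension groups -/

section Final

set_option linter.unusedSectionVars false
set_option linter.unusedVariables false

open Pretriangulated

variable {k : Type} [Field k] {C : Type} [Category.{0} C] [Preadditive C] [Linear k C]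
  [HasShift C ℤ] [Limits.HasZeroObject C] [∀ n : ℤ, (shiftFunctor C n).Additive]
  [Pretriangulated C] [Limits.HasFiniteBiproducts C]
  {A : Type} [Ring A] {T : C}

theorem memJ_of (φ : A ≃+* End T) {e : A} {S : C} {i : S ⟶ T} {p : T ⟶ S} (hip : i ≫ p = 𝟙 S)
    (hpi : p ≫ i = emo φ e) (x : T ⟶ S) (h : S ⟶ T) : me φ (x ≫ h) ∈ genIdeal e := by
  have h1 : x ≫ h = (x ≫ i) ≫ (p ≫ i) ≫ (p ≫ h) := by
    simp only [Category.assoc]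
    rw [← Category.assoc i p, hip, Category.id_comp, ← Category.assoc i p, hip, Category.id_comp]
  rw [h1, hpi, me_comp, me_comp, me_emo]
  exact Submodule.smul_mem _ (MulOpposite.op (me φ (x ≫ i))) (mem_genIdeal (e := e) _)

theorem me_sum (φ : A ≃+* End T) {n : ℕ} (f : Fin n → (T ⟶ T)) :
    me φ (∑ j, f j) = ∑ j, me φ (f j) :=
  map_sum (AddMonoidHom.mk' (me φ) (fun a b => me_add φ a b)) f Finset.univ

theorem memJ_add (φ : A ≃+* End T) {e : A} {S : C} {i : S ⟶ T} {p : T ⟶ S} (hip : i ≫ p = 𝟙 S)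
    (hpi : p ≫ i = emo φ e) {R : C} (hR : InAdd S R) (x : T ⟶ R) (h : R ⟶ T) :
    me φ (x ≫ h) ∈ genIdeal e := by
  obtain ⟨n, s, r, hsr⟩ := hR
  have : x ≫ h = ∑ j, (x ≫ s j) ≫ (r j ≫ h) := by
    conv_lhs => rw [← Category.comp_id x, ← hsr, Preadditive.comp_sum, Preadditive.sum_comp]
    simp only [Category.assoc]
  rw [this, me_sum]
  exact Submodule.sum_mem _ fun j _ => memJ_of φ hip hpi _ _

theorem memJ_fac (φ : A ≃+* End T) {e : A} {S : C} {i : S ⟶ T} {p : T ⟶ S}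
    (hpi : p ≫ i = emo φ e) {R : C} {r : R ⟶ T} (hr : ∀ f : S ⟶ T, ∃ g : S ⟶ R, f = g ≫ r)
    {a : A} (ha : a ∈ genIdeal e) : ∃ y : T ⟶ R, emo φ a = y ≫ r := by
  refine Submodule.span_induction (p := fun a _ => ∃ y : T ⟶ R, emo φ a = y ≫ r) ?_ ?_ ?_ ?_ ha
  · rintro _ ⟨b, rfl⟩
    obtain ⟨g, hg⟩ := hr (i ≫ emo φ b)
    refine ⟨p ≫ g, ?_⟩
    rw [emo_mul, ← hpi, Category.assoc, hg, Category.assoc]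
  · exact ⟨0, by rw [emo_zero, Limits.zero_comp]⟩
  · rintro x y _ _ ⟨f, hf⟩ ⟨g, hg⟩
    exact ⟨f + g, by rw [emo_add, hf, hg, Preadditive.add_comp]⟩
  · rintro c x _ ⟨f, hf⟩
    refine ⟨emo φ c.unop ≫ f, ?_⟩
    rw [Category.assoc, ← hf, ← emo_mul]
    rfl

theorem J_cover (φ : A ≃+* End T) {e : A} {S : C} {i : S ⟶ T} {p : T ⟶ S} (hip : i ≫ p = 𝟙 S)
    (hpi : p ≫ i = emo φ e) {R : C} (hR : InAdd S R) {r : R ⟶ T}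
    (hr : ∀ f : S ⟶ T, ∃ g : S ⟶ R, f = g ≫ r) :
    ∃ ρ : HM φ R →ₗ[Aᵐᵒᵖ] genIdeal e, Function.Surjective ρ ∧
      ∀ y : T ⟶ R, ρ (hmk φ y) = 0 ↔ y ≫ r = 0 := by
  refine ⟨LinearMap.codRestrict (genIdeal e) ((HMT φ).symm.toLinearMap ∘ₗ Hmap φ r)
    (fun x => memJ_add φ hip hpi hR (hun φ x) r), ?_, ?_⟩
  · rintro ⟨a, ha⟩
    obtain ⟨y, hy⟩ := memJ_fac φ hpi hr ha
    refine ⟨hmk φ y, Subtype.ext ?_⟩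
    change me φ (y ≫ r) = a
    rw [← hy, me_emo]
  · intro y
    rw [Subtype.ext_iff]
    change me φ (y ≫ r) = 0 ↔ _
    constructor
    · intro h
      rw [← emo_me φ (y ≫ r), h, emo_zero]
    · intro h
      rw [h, me_zero]

theorem K_hom (hfin : ∀ X Y : C, FiniteDimensional k (X ⟶ Y))
    (ct : ∀ X : C, (∀ f : T ⟶ X⟦(1:ℤ)⟧, f = 0) ↔ InAdd T X) (φ : A ≃+* End T)
    {M : Type} [AddCommGroup M] [Module Aᵐᵒᵖ M]
    {U R W : C} {u : U ⟶ R} {r : R ⟶ T} {δ : T ⟶ U⟦(1:ℤ)⟧}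
    (hd : Triangle.mk u r δ ∈ distTriang C) (ρ : HM φ R →ₗ[Aᵐᵒᵖ] M)
    (hρ : ∀ y : T ⟶ R, ρ (hmk φ y) = 0 ↔ y ≫ r = 0)
    (f : LinearMap.ker ρ →ₗ[Aᵐᵒᵖ] HM φ W) :
    ∃ ψ : U ⟶ W, ∀ κ : LinearMap.ker ρ, ∃ x : T ⟶ U, κ.1 = hmk φ (x ≫ u) ∧
      f κ = hmk φ (x ≫ ψ) := by
  let c : HM φ U →ₗ[Aᵐᵒᵖ] LinearMap.ker ρ := LinearMap.codRestrict _ (Hmap φ u) (fun x => by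
    rw [LinearMap.mem_ker]
    refine (hρ (hun φ x ≫ u)).2 ?_
    rw [Category.assoc, tri_z12 hd, Limits.comp_zero])
  obtain ⟨ψ, hψ⟩ := HM_full hfin ct φ (f ∘ₗ c)
  refine ⟨ψ, fun κ => ?_⟩
  obtain ⟨x, hx⟩ := tri_co2 hd (hun φ κ.1) ((hρ _).1 κ.2)
  refine ⟨x, hx, ?_⟩
  rw [← hψ x]
  change f κ = f (c (hmk φ x))
  congr 1
  exact Subtype.ext hx

theorem extVan_retract {R : Type} [Ring R] {M N N' : Type} [AddCommGroup M] [Module R M]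
    [AddCommGroup N] [Module R N] [AddCommGroup N'] [Module R N'] (H : ExtVan R M N) {n : ℕ}
    (s : Fin n → (N' →ₗ[R] N)) (r : Fin n → (N →ₗ[R] N')) (hsr : ∀ x, ∑ j, r j (s j x) = x) :
    ExtVan R M N' := by
  intro P _ _ p hp f
  choose g hg using fun j => H P p hp (s j ∘ₗ f)
  refine ⟨∑ j, r j ∘ₗ g j, fun x => ?_⟩
  rw [LinearMap.sum_apply]
  refine Eq.trans (Finset.sum_congr rfl fun j _ => ?_) (hsr (f x))
  rw [LinearMap.comp_apply, hg]
  rfl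

/-- The trace of `S` in `Hom(T, X)`. -/
def NS (φ : A ≃+* End T) {S : C} (p : T ⟶ S) (X : C) : Submodule Aᵐᵒᵖ (HM φ X) :=
  Submodule.span Aᵐᵒᵖ {x | ∃ h : S ⟶ X, x = hmk φ (p ≫ h)}

theorem NS_mem (φ : A ≃+* End T) {S : C} {i : S ⟶ T} {p : T ⟶ S} (hip : i ≫ p = 𝟙 S) {X : C}
    (x : T ⟶ S) (h : S ⟶ X) : hmk φ (x ≫ h) ∈ NS φ p X := by
  have h1 : x ≫ h = (x ≫ i) ≫ (p ≫ h) := by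
    simp only [Category.assoc]
    rw [← Category.assoc i p, hip, Category.id_comp]
  have h2 : hmk φ (x ≫ h) = MulOpposite.op (me φ (x ≫ i)) • hmk φ (p ≫ h) := by
    rw [HM_smul, MulOpposite.unop_op, emo_me, ← h1]
  rw [h2]
  exact Submodule.smul_mem _ _ (Submodule.subset_span ⟨h, rfl⟩)

theorem NS_mem_add (φ : A ≃+* End T) {S : C} {i : S ⟶ T} {p : T ⟶ S} (hip : i ≫ p = 𝟙 S) {X R : C}
    (hR : InAdd S R) (x : T ⟶ R) (h : R ⟶ X) : hmk φ (x ≫ h) ∈ NS φ p X := by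
  obtain ⟨n, s, r, hsr⟩ := hR
  have : x ≫ h = ∑ j, (x ≫ s j) ≫ (r j ≫ h) := by
    conv_lhs => rw [← Category.comp_id x, ← hsr, Preadditive.comp_sum, Preadditive.sum_comp]
    simp only [Category.assoc]
  rw [this, hmk_sum]
  exact Submodule.sum_mem _ fun j _ => NS_mem φ hip _ _

theorem NS_map (φ : A ≃+* End T) {S : C} (p : T ⟶ S) {X Y : C} (g : X ⟶ Y) :
    NS φ p X ≤ (NS φ p Y).comap (Hmap φ g) := by
  refine Submodule.span_le.2 ?_
  rintro _ ⟨h, rfl⟩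
  refine Submodule.subset_span ⟨h ≫ g, ?_⟩
  rw [Hmap_apply, Category.assoc]

/-- The quotient by the trace. -/
abbrev GM (φ : A ≃+* End T) {S : C} (p : T ⟶ S) (X : C) : Type := HM φ X ⧸ NS φ p X

/-- Functoriality of `GM`. -/
def Gmap (φ : A ≃+* End T) {S : C} (p : T ⟶ S) {X Y : C} (g : X ⟶ Y) :
    GM φ p X →ₗ[Aᵐᵒᵖ] GM φ p Y := Submodule.mapQ _ _ (Hmap φ g) (NS_map φ p g)

theorem Gmap_mk (φ : A ≃+* End T) {S : C} (p : T ⟶ S) {X Y : C} (g : X ⟶ Y) (x : T ⟶ X) :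
    Gmap φ p g ((NS φ p X).mkQ (hmk φ x)) = (NS φ p Y).mkQ (hmk φ (x ≫ g)) := rfl

theorem Gmap_sum (φ : A ≃+* End T) {S : C} (p : T ⟶ S) {X : C} {n : ℕ} {s : Fin n → (X ⟶ T)}
    {r : Fin n → (T ⟶ X)} (hsr : ∑ j, s j ≫ r j = 𝟙 X) (x : GM φ p X) :
    ∑ j, Gmap φ p (r j) (Gmap φ p (s j) x) = x := by
  obtain ⟨y, rfl⟩ := (NS φ p X).mkQ_surjective x
  have : ∀ j, Gmap φ p (r j) (Gmap φ p (s j) ((NS φ p X).mkQ y)) =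
      (NS φ p X).mkQ (hmk φ (hun φ y ≫ s j ≫ r j)) := fun j => by
    rw [← hmk_hun φ y, Gmap_mk, Gmap_mk, hun_hmk, Category.assoc]
  rw [Finset.sum_congr rfl fun j _ => this j, ← map_sum, ← hmk_sum, ← Preadditive.comp_sum, hsr,
    Category.comp_id, hmk_hun]

/-- `GM T` is `A / J`. -/
theorem GMT (φ : A ≃+* End T) {e : A} {S : C} {i : S ⟶ T} {p : T ⟶ S} (hip : i ≫ p = 𝟙 S)
    (hpi : p ≫ i = emo φ e) : Nonempty ((A ⧸ genIdeal e) ≃ₗ[Aᵐᵒᵖ] GM φ p T) := by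
  refine ⟨Submodule.Quotient.equiv _ _ (HMT φ) (le_antisymm ?_ ?_)⟩
  · rw [Submodule.map_le_iff_le_comap]
    refine Submodule.span_le.2 ?_
    rintro _ ⟨b, rfl⟩
    change hmk φ (emo φ (b * e)) ∈ NS φ p T
    rw [emo_mul, ← hpi, Category.assoc]
    exact NS_mem φ hip _ _
  · refine Submodule.span_le.2 ?_
    rintro _ ⟨h, rfl⟩
    exact ⟨me φ (p ≫ h), memJ_of φ hip hpi p h, emo_me φ _⟩

end Final

section Final2

set_option linter.unusedSectionVars false
set_option linter.unusedVariables false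

open Pretriangulated

variable {k : Type} [Field k] {C : Type} [Category.{0} C] [Preadditive C] [Linear k C]
  [HasShift C ℤ] [Limits.HasZeroObject C] [∀ n : ℤ, (shiftFunctor C n).Additive]
  [Pretriangulated C] [Limits.HasFiniteBiproducts C]
  {A : Type} [Ring A] {T : C}

theorem G_exact (φ : A ≃+* End T) {S : C} {i : S ⟶ T} {p : T ⟶ S} (hip : i ≫ p = 𝟙 S)
    (rigid : ∀ f : T ⟶ T⟦(1:ℤ)⟧, f = 0)
    {R V : C} {l : T ⟶ R} {v : R ⟶ V} {d : V ⟶ T⟦(1:ℤ)⟧} (hd : Triangle.mk l v d ∈ distTriang C)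
    (hR : InAdd S R) (hSV : ∀ f : S ⟶ V⟦(1:ℤ)⟧, f = 0)
    {T1 T0 : C} {a : T1 ⟶ T0} {b : T0 ⟶ V⟦(1:ℤ)⟧} {c : V⟦(1:ℤ)⟧ ⟶ T1⟦(1:ℤ)⟧}
    (ha : Triangle.mk a b c ∈ distTriang C)
    (hb : ∀ f : T ⟶ V⟦(1:ℤ)⟧, ∃ g : T ⟶ T0, f = g ≫ b) :
    ∃ q : GM φ p T0 →ₗ[Aᵐᵒᵖ] HM φ (V⟦(1:ℤ)⟧), Function.Injective (Gmap φ p a) ∧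
      Function.Surjective q ∧ Function.Exact (Gmap φ p a) q := by
  have hN : NS φ p T0 ≤ LinearMap.ker (Hmap φ b) := by
    refine Submodule.span_le.2 ?_
    rintro _ ⟨h, rfl⟩
    change (p ≫ h) ≫ b = 0
    rw [Category.assoc, hSV (h ≫ b), Limits.comp_zero]
  have hN' : NS φ p T0 ≤ (NS φ p T1).map (Hmap φ a) := by
    refine Submodule.span_le.2 ?_
    rintro _ ⟨h, rfl⟩
    obtain ⟨g, rfl⟩ := tri_co2 ha h (hSV _)
    refine ⟨hmk φ (p ≫ g), Submodule.subset_span ⟨g, rfl⟩, ?_⟩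
    rw [Hmap_apply, Category.assoc]
  have hz : ∀ z : T ⟶ T1, z ≫ a = 0 → hmk φ z ∈ NS φ p T1 := by
    intro z hza
    obtain ⟨w, hw⟩ := tri_co1 ha (z⟦(1:ℤ)⟧') (by rw [← Functor.map_comp, hza, Functor.map_zero])
    obtain ⟨w', rfl⟩ := (shiftFunctor C (1:ℤ)).map_surjective w
    obtain ⟨y, rfl⟩ := tri_co3 hd w' (rigid _)
    obtain ⟨t, ht⟩ := (shiftFunctor C (1:ℤ)).map_surjective (v⟦(1:ℤ)⟧' ≫ c)
    have : z = y ≫ t := by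
      apply (shiftFunctor C (1:ℤ)).map_injective
      rw [hw, Functor.map_comp, Functor.map_comp, Category.assoc, ht]
    rw [this]
    exact NS_mem_add φ hip hR _ _
  refine ⟨(NS φ p T0).liftQ (Hmap φ b) hN, ?_, ?_, ?_⟩
  · rw [← LinearMap.ker_eq_bot, LinearMap.ker_eq_bot']
    intro m hm
    obtain ⟨x, rfl⟩ := (NS φ p T1).mkQ_surjective m
    have hm' : Hmap φ a x ∈ NS φ p T0 := by
      have : (NS φ p T0).mkQ (Hmap φ a x) = 0 := hm
      rwa [Submodule.mkQ_apply, Submodule.Quotient.mk_eq_zero] at this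
    obtain ⟨n, hn, hna⟩ := hN' hm'
    rw [Submodule.mkQ_apply, Submodule.Quotient.mk_eq_zero]
    have h1 : Hmap φ a (x - n) = 0 := by rw [map_sub, hna, sub_self]
    have h2 := hz (hun φ (x - n)) h1
    rw [hmk_hun] at h2
    have := Submodule.add_mem _ h2 hn
    rwa [sub_add_cancel] at this
  · intro f
    obtain ⟨g, hg⟩ := hb (hun φ f)
    exact ⟨(NS φ p T0).mkQ (hmk φ g), hg.symm⟩
  · intro m
    obtain ⟨x, rfl⟩ := (NS φ p T0).mkQ_surjective m
    constructor
    · intro hx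
      obtain ⟨y, hy⟩ := tri_co2 ha (hun φ x) hx
      refine ⟨(NS φ p T1).mkQ (hmk φ y), ?_⟩
      rw [Gmap_mk, ← hy, hmk_hun]
    · rintro ⟨y, hy⟩
      obtain ⟨y, rfl⟩ := (NS φ p T1).mkQ_surjective y
      rw [← hy]
      change (hun φ y ≫ a) ≫ b = 0
      rw [Category.assoc, tri_z12 ha, Limits.comp_zero]

theorem tri_rot {X Y Z : C} {a : X ⟶ Y} {b : Y ⟶ Z} {c : Z ⟶ X⟦(1:ℤ)⟧}
    (hd : Triangle.mk a b c ∈ distTriang C) :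
    Triangle.mk b c (-a⟦(1:ℤ)⟧') ∈ distTriang C := rot_of_distTriang _ hd

theorem tri_main (hfin : ∀ X Y : C, FiniteDimensional k (X ⟶ Y))
    (serre : ∀ X Y : C, Nonempty ((X ⟶ Y) ≃ₗ[k] Module.Dual k (Y ⟶ X⟦(2:ℤ)⟧)))
    (ct : ∀ X : C, (∀ f : T ⟶ X⟦(1:ℤ)⟧, f = 0) ↔ InAdd T X) (φ : A ≃+* End T)
    {e : A} {S : C} {i : S ⟶ T} {p : T ⟶ S} (hip : i ≫ p = 𝟙 S) (hpi : p ≫ i = emo φ e) :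
    ExtVan Aᵐᵒᵖ (genIdeal e) A ∧ ExtVan Aᵐᵒᵖ (genIdeal e) (A ⧸ genIdeal e) ∧
    ∀ (Y : Type) [AddCommGroup Y] [Module Aᵐᵒᵖ Y], Module.Finite Aᵐᵒᵖ Y → JTriv e Y →
      ExtVan Aᵐᵒᵖ Y (A ⧸ genIdeal e) → ExtVan Aᵐᵒᵖ (genIdeal e) Y := by
  have hS : InAdd T S := ⟨1, fun _ => i, fun _ => p, by simp [hip]⟩
  have rigid := ct_rigid ct
  have hST1 : ∀ f : S ⟶ T⟦(1:ℤ)⟧, f = 0 := inAdd_zero_left hS rigid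
  have hTS1 : ∀ f : T ⟶ S⟦(1:ℤ)⟧, f = 0 := (ct S).2 hS
  have hSS1 : ∀ f : S ⟶ S⟦(1:ℤ)⟧, f = 0 := inAdd_zero_left hS hTS1
  obtain ⟨R, r, hR, hr⟩ := right_approx hfin S T
  obtain ⟨U, u, δ, hU⟩ := distinguished_cocone_triangle₁ r
  obtain ⟨ρ, hρs, hρ⟩ := J_cover φ hip hpi hR hr
  have hproj : Module.Projective Aᵐᵒᵖ (HM φ R) := HM_proj φ (HM_proj φ (HM_projT φ) hS) hR
  -- maps from `U` to `T` factor through `u`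
  have hUT : ∀ ψ : U ⟶ T, ∃ ξ : R ⟶ T, ψ = u ≫ ξ := by
    intro ψ
    have h0 : δ ≫ ψ⟦(1:ℤ)⟧' = 0 := rigid _
    obtain ⟨ξ', hξ'⟩ := tri_y2 (tri_rot (tri_rot hU)) (ψ⟦(1:ℤ)⟧') h0
    obtain ⟨ξ, rfl⟩ := (shiftFunctor C (1:ℤ)).map_surjective ξ'
    refine ⟨-ξ, (shiftFunctor C (1:ℤ)).map_injective ?_⟩
    rw [hξ', Functor.map_comp, Functor.map_neg, Preadditive.comp_neg, Preadditive.neg_comp]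
  have hSU : ∀ f : S ⟶ U⟦(1:ℤ)⟧, f = 0 := by
    intro f
    obtain ⟨g, hg⟩ := tri_co1 hU f (inAdd_zero_right (inAdd_shift hR) hSS1 _)
    obtain ⟨g', rfl⟩ := hr g
    rw [hg, Category.assoc, tri_z23 hU, Limits.comp_zero]
  have hUS : ∀ f : U ⟶ S⟦(1:ℤ)⟧, f = 0 := serre_symm hfin serre hSU
  have hUU : ∀ f : U ⟶ U⟦(1:ℤ)⟧, f = 0 := by
    intro f
    obtain ⟨g, hg⟩ := tri_co1 hU f (inAdd_zero_right (inAdd_shift hR) hUS _)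
    obtain ⟨ξ, rfl⟩ := hUT g
    rw [hg, Category.assoc, inAdd_zero_left hR hSU (ξ ≫ δ), Limits.comp_zero]
  have hKU : ∀ (f : LinearMap.ker ρ →ₗ[Aᵐᵒᵖ] HM φ (U⟦(1:ℤ)⟧)) κ, f κ = 0 := by
    intro f κ
    obtain ⟨ψ, hψ⟩ := K_hom hfin ct φ hU ρ hρ f
    obtain ⟨x, -, hx⟩ := hψ κ
    rw [hx, hUU ψ, Limits.comp_zero, hmk_zero]
  obtain ⟨E⟩ := GMT φ hip hpi
  have hKA : ∀ (f : LinearMap.ker ρ →ₗ[Aᵐᵒᵖ] (A ⧸ genIdeal e)) κ, f κ = 0 := by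
    let j : (A ⧸ genIdeal e) →ₗ[Aᵐᵒᵖ] HM φ (U⟦(1:ℤ)⟧) :=
      (genIdeal e).liftQ (Hmap φ δ ∘ₗ (HMT φ).toLinearMap) (by
        intro a ha
        obtain ⟨y, hy⟩ := memJ_fac φ hpi hr ha
        change emo φ a ≫ δ = 0
        rw [hy, Category.assoc, tri_z23 hU, Limits.comp_zero])
    have hj : ∀ m, j m = 0 → m = 0 := by
      intro m hm
      obtain ⟨a, rfl⟩ := (genIdeal e).mkQ_surjective m
      obtain ⟨y, hy⟩ := tri_co3 hU (emo φ a) hm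
      rw [Submodule.mkQ_apply, Submodule.Quotient.mk_eq_zero, ← me_emo φ a, hy]
      exact memJ_add φ hip hpi hR y r
    intro f κ
    exact hj _ (hKU (j ∘ₗ f) κ)
  have hKG : ∀ (f : LinearMap.ker ρ →ₗ[Aᵐᵒᵖ] GM φ p T) κ, f κ = 0 := by
    intro f κ
    have := hKA (E.symm.toLinearMap ∘ₗ f) κ
    exact E.symm.injective (this.trans (map_zero E.symm).symm)
  refine ⟨?_, ?_, ?_⟩
  · refine extVan_equiv_right (HMT φ).symm (extVan_of_proj ρ hρs fun f => ?_)
    obtain ⟨ψ, hψ⟩ := K_hom hfin ct φ hU ρ hρ f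
    obtain ⟨ξ, rfl⟩ := hUT ψ
    refine ⟨Hmap φ ξ, fun κ => ?_⟩
    obtain ⟨x, h1, h2⟩ := hψ κ
    rw [h1, h2, Hmap_apply, Category.assoc]
  · exact extVan_of_proj ρ hρs fun f => ⟨0, fun κ => by rw [hKA f κ]; rfl⟩
  · intro Y _ _ hYf hYt hYB
    obtain ⟨Z, ⟨EZ⟩⟩ := HM_realFin hfin ct φ hYf
    have hSZ : ∀ f : S ⟶ Z, f = 0 := by
      intro f
      have h1 := e_of_jTriv hYt (EZ.symm (hmk φ (p ≫ f)))
      rw [← map_smul, EZ.symm.map_eq_zero_iff, HM_smul, MulOpposite.unop_op, ← hpi,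
        hmk_eq_zero] at h1
      have h2 : f = i ≫ (p ≫ i) ≫ p ≫ f := by
        simp only [Category.assoc]
        rw [← Category.assoc i p, hip, Category.id_comp, ← Category.assoc i p, hip,
          Category.id_comp]
      rw [h2, h1, Limits.comp_zero]
    have hZS : ∀ f : Z ⟶ S⟦(1:ℤ)⟧⟦(1:ℤ)⟧, f = 0 := serre_zero hfin serre hSZ
    obtain ⟨R', l, hR', hl⟩ := left_approx hfin S T
    obtain ⟨V, v, d, hV⟩ := distinguished_cocone_triangle l
    have hVS : ∀ f : V ⟶ S⟦(1:ℤ)⟧, f = 0 := by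
      intro f
      obtain ⟨g, hg⟩ := tri_y3 hV f (inAdd_zero_left hR' hSS1 _)
      obtain ⟨g', rfl⟩ := (shiftFunctor C (1:ℤ)).map_surjective g
      obtain ⟨g'', rfl⟩ := hl g'
      rw [hg, Functor.map_comp, ← Category.assoc, tri_z31 hV, Limits.zero_comp]
    have hSV : ∀ f : S ⟶ V⟦(1:ℤ)⟧, f = 0 := serre_symm hfin serre hVS
    obtain ⟨T1, T0, a, b, c, ha, ⟨n1, s1, r1, hsr1⟩, ⟨n0, s0, r0, hsr0⟩, hb⟩ :=
      ct_pres hfin ct (V⟦(1:ℤ)⟧)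
    obtain ⟨q, hai, hqs, haq⟩ := G_exact φ hip rigid hV hR' hSV ha hb
    have hZG : ExtVan Aᵐᵒᵖ (HM φ Z) (GM φ p T1) :=
      extVan_retract (extVan_equiv_left EZ (extVan_equiv_right E hYB))
        (fun j => Gmap φ p (s1 j)) (fun j => Gmap φ p (r1 j)) (Gmap_sum φ p hsr1)
    have hKG0 : ∀ (f : LinearMap.ker ρ →ₗ[Aᵐᵒᵖ] GM φ p T0) κ, f κ = 0 := by
      intro f κ
      rw [← Gmap_sum φ p hsr0 (f κ)]
      refine Finset.sum_eq_zero fun j _ => ?_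
      have := hKG (Gmap φ p (s0 j) ∘ₗ f) κ
      rw [LinearMap.comp_apply] at this
      rw [this, map_zero]
    have hKY : ∀ (f : LinearMap.ker ρ →ₗ[Aᵐᵒᵖ] HM φ Z) κ, f κ = 0 := by
      intro f κ
      refine HM_sep hfin serre ct φ (hun φ (f κ)) fun g => ?_
      -- lift `g` to `V⟦1⟧`
      obtain ⟨g1, hg1⟩ : ∃ g1 : Z ⟶ V⟦(1:ℤ)⟧, g = g1 ≫ d⟦(1:ℤ)⟧' := by
        have h0 : g ≫ l⟦(1:ℤ)⟧'⟦(1:ℤ)⟧' = 0 :=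
          inAdd_zero_right (inAdd_shift (inAdd_shift hR')) hZS _
        obtain ⟨g1, hg1⟩ := tri_co1 (tri_rot (tri_rot (tri_rot hV))) g (by
          rw [Functor.map_neg, Preadditive.comp_neg, h0, neg_zero])
        exact ⟨-g1, by rw [hg1, Preadditive.comp_neg, Preadditive.neg_comp]⟩
      obtain ⟨θ, hθ⟩ := extVan_lift hZG (Gmap φ p a) hai q hqs haq (Hmap φ g1)
      have h1 := hθ (f κ)
      have h2 := hKG0 (θ ∘ₗ f) κ
      rw [LinearMap.comp_apply] at h2
      rw [h2, map_zero] at h1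
      have h3 : hun φ (f κ) ≫ g1 = 0 := h1.symm
      rw [hg1, ← Category.assoc, h3, Limits.zero_comp]
    exact extVan_equiv_right EZ.symm
      (extVan_of_proj ρ hρs fun f => ⟨0, fun κ => by rw [hKY f κ]; rfl⟩)

end Final2

/-- Let `A` be a 2-Calabi-Yau tilted algebra, `J = A e A`, `B = A/J`.
For every Cohen-Macaulay `B`-module `Y` there is a short exact sequence of `A`-modules
`0 → J_X → X → Y → 0` with `J_X ∈ add J`, `X ∈ J^⊥`, and `J_X → X` an
`add J`-approximation of `X`; in particular `F(X) ≅ Y`, so `F : J^⊥ → CMP B` is dense. -/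
theorem functor_F_is_dense
    (k A : Type) [Field k] [IsAlgClosed k] [Ring A] [Algebra k A] [FiniteDimensional k A]
    (hA : IsCYTilted k A) (e : A) (he : IsPrimitiveIdempotent e)
    (Y : ModuleCat.{0} Aᵐᵒᵖ) [Module.Finite Aᵐᵒᵖ Y] (hYtriv : JTriv e Y)
    -- `Y` is Cohen-Macaulay over `B`: every extension of `B` by `Y` in `mod B` splits
    (hYCM : ∀ (E : ModuleCat.{0} Aᵐᵒᵖ) (u : (A ⧸ genIdeal e) →ₗ[Aᵐᵒᵖ] E)
      (v : E →ₗ[Aᵐᵒᵖ] Y), JTriv e E → Function.Injective u → Function.Surjective v →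
      Function.Exact u v → ∃ s : Y →ₗ[Aᵐᵒᵖ] E, v ∘ₗ s = LinearMap.id) :
    ∃ (JX X : ModuleCat.{0} Aᵐᵒᵖ) (f : JX →ₗ[Aᵐᵒᵖ] X) (g : X →ₗ[Aᵐᵒᵖ] Y),
      Function.Injective f ∧ Function.Surjective g ∧ Function.Exact f g ∧
      IsAddJApprox e JX X f ∧
      IsCM k A X ∧
      Subsingleton (rext1 k A (ModuleCat.of Aᵐᵒᵖ ↥(genIdeal e)) X) ∧
      Subsingleton (rext1 k A X (ModuleCat.of Aᵐᵒᵖ ↥(genIdeal e))) ∧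
      Nonempty ((X ⧸ LinearMap.range f) ≃ₗ[Aᵐᵒᵖ] Y) := by
  obtain ⟨W⟩ := hA
  letI := W.cat
  letI := W.pre
  letI := W.lin
  letI := W.shift
  letI := W.zero
  letI := W.shiftAdd
  letI := W.tri
  letI := W.biprod
  letI := W.idem
  obtain ⟨φ'⟩ := W.algIso
  let φ : A ≃+* End W.T := φ'.toRingEquiv
  have hid : emo φ e ≫ emo φ e = emo φ e := by
    rw [← emo_mul, he.1.eq]
  obtain ⟨S, i, p, hip, hpi⟩ := IsIdempotentComplete.idempotents_split W.T (emo φ e) hid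
  have ct : ∀ X : W.C, (∀ f : W.T ⟶ X⟦(1:ℤ)⟧, f = 0) ↔ InAdd W.T X := by
    intro X
    rw [W.clusterTilting X]
    constructor
    · rintro ⟨n, s, r, hsr⟩
      refine ⟨n, fun j => s ≫ Limits.biproduct.π (fun _ => W.T) j,
        fun j => Limits.biproduct.ι (fun _ => W.T) j ≫ r, ?_⟩
      have h : s ≫ (∑ j, Limits.biproduct.π (fun _ : Fin n => W.T) j ≫
          Limits.biproduct.ι (fun _ : Fin n => W.T) j) ≫ r = 𝟙 X := by
        rw [Limits.biproduct.total, Category.id_comp, hsr]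
      rw [Preadditive.sum_comp, Preadditive.comp_sum] at h
      simpa only [Category.assoc] using h
    · rintro ⟨n, s, r, hsr⟩
      exact ⟨n, Limits.biproduct.lift s, Limits.biproduct.desc r, by
        rw [Limits.biproduct.lift_desc, hsr]⟩
  obtain ⟨h1, h2, h3⟩ := tri_main W.homFinite W.serre ct φ hip hpi
  have h4 := extVan_YB he.1 Y hYtriv hYCM
  exact assembly k he.1 Y hYtriv h1 h2 (h3 Y inferInstance hYtriv h4) h4
end
end

section
/- Let 0 → J → X₂ → X₁ → 0 be a non-split short exact sequence of A-modules with Ext^1_A(J, J) = 0. Then the connecting map gives dim Ext^1_A(X₁, J) > dim Ext^1_A(X₂, J); that is, the dimension of the first extension group with J strictly drops. -/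
noncomputable section

open CategoryTheory Opposite DirectSum MulOpposite

section Helper

open ModuleCat

variable {k : Type} [Field k] {R : Type} [Ring R] [Algebra k R]

/-- gluing -/
theorem edd_glue {A B C N : Type} [AddCommGroup A] [AddCommGroup B] [AddCommGroup C]
    [AddCommGroup N] [Module R A] [Module R B] [Module R C] [Module R N]
    (a : A →ₗ[R] C) (b : B →ₗ[R] C) (f : A →ₗ[R] N) (g : B →ₗ[R] N)
    (hs : ∀ c, ∃ x y, a x + b y = c)
    (hk : ∀ x y, a x + b y = 0 → f x + g y = 0) :
    ∃ h : C →ₗ[R] N, h ∘ₗ a = f ∧ h ∘ₗ b = g := by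
  have hs' : Function.Surjective (a.coprod b) := fun c => by
    obtain ⟨x, y, h⟩ := hs c
    exact ⟨(x, y), by simpa using h⟩
  have hk' : LinearMap.ker (a.coprod b) ≤ LinearMap.ker (f.coprod g) := by
    rintro ⟨x, y⟩ h
    simpa using hk x y (by simpa using h)
  refine ⟨(LinearMap.ker (a.coprod b)).liftQ (f.coprod g) hk' ∘ₗ
    ((a.coprod b).quotKerEquivOfSurjective hs').symm.toLinearMap, ?_, ?_⟩
  · ext x
    have : ((a.coprod b).quotKerEquivOfSurjective hs').symm (a x) =
        Submodule.Quotient.mk (x, 0) := by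
      rw [LinearEquiv.symm_apply_eq]
      simp [LinearMap.quotKerEquivOfSurjective]
    simp [this]
  · ext x
    have : ((a.coprod b).quotKerEquivOfSurjective hs').symm (b x) =
        Submodule.Quotient.mk (0, x) := by
      rw [LinearEquiv.symm_apply_eq]
      simp [LinearMap.quotKerEquivOfSurjective]
    simp [this]

variable (k) in
/-- precomposition -/
def eddPre {A B N : Type} [AddCommGroup A] [AddCommGroup B]
    [AddCommGroup N] [Module R A] [Module R B] [Module R N] [Module k N] [IsScalarTower k R N]
    (a : A →ₗ[R] B) : (B →ₗ[R] N) →ₗ[k] (A →ₗ[R] N) where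
  toFun f := f ∘ₗ a
  map_add' _ _ := rfl
  map_smul' _ _ := rfl

variable (k) in
/-- `Ext¹` from a presentation -/
abbrev EddE {P M : Type} (N : Type) [AddCommGroup P] [AddCommGroup M]
    [AddCommGroup N] [Module R P] [Module R M] [Module R N] [Module k N] [IsScalarTower k R N]
    (p : P →ₗ[R] M) : Type :=
  (LinearMap.ker p →ₗ[R] N) ⧸
    LinearMap.range (eddPre k (N := N) (LinearMap.ker p).subtype)

/-- comparison of presentations -/
theorem edd_cmp {P Q M N : Type} [AddCommGroup P] [AddCommGroup Q] [AddCommGroup M]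
    [AddCommGroup N] [Module R P] [Module R Q] [Module R M] [Module R N] [Module k N]
    [IsScalarTower k R N] (p : P →ₗ[R] M) (q : Q →ₗ[R] M) [Module.Projective R Q]
    (hp : Function.Surjective p) (hq : Function.Surjective q) :
    ∃ t : EddE k N p →ₗ[k] EddE k N q, Function.Injective t := by
  obtain ⟨φ, hφ⟩ := Module.projective_lifting_property p q hp
  have hφ' : ∀ x, p (φ x) = q x := fun x => LinearMap.congr_fun hφ x
  let ψ : LinearMap.ker q →ₗ[R] LinearMap.ker p := φ.restrict (fun x hx => by
    simpa [hφ'] using hx)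
  refine ⟨Submodule.mapQ _ _ (eddPre k ψ) ?_, ?_⟩
  · rintro _ ⟨g, rfl⟩
    exact ⟨g ∘ₗ φ, by ext x; rfl⟩
  · rw [← LinearMap.ker_eq_bot, LinearMap.ker_eq_bot']
    intro x hx
    obtain ⟨f, rfl⟩ := Submodule.Quotient.mk_surjective _ x
    rw [Submodule.mapQ_apply, Submodule.Quotient.mk_eq_zero] at hx
    rw [Submodule.Quotient.mk_eq_zero]
    obtain ⟨g, hg⟩ := hx
    have hg' : ∀ y : LinearMap.ker q, g y = f (ψ y) := fun y => LinearMap.congr_fun hg y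
    obtain ⟨h, h1, h2⟩ := edd_glue (LinearMap.ker p).subtype φ f g (fun c => by
        obtain ⟨y, hy⟩ := hq (p c)
        exact ⟨⟨c - φ y, by simp [hφ', hy]⟩, y, by simp⟩) (fun x y hxy => by
        have hy : y ∈ LinearMap.ker q := by
          have := congrArg p hxy
          simpa [hφ'] using this
        have : x = - ψ ⟨y, hy⟩ := by
          ext
          exact eq_neg_of_add_eq_zero_left hxy
        rw [this, map_neg, hg' ⟨y, hy⟩]; simp)
    exact ⟨h, h1⟩

variable (k) in
theorem edd_res (M N : ModuleCat.{0} R) :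
    ∃ (Q : ModuleCat.{0} R) (q : Q →ₗ[R] M), Module.Projective R Q ∧ Function.Surjective q ∧
      Nonempty (((Ext k (ModuleCat.{0} R) 1).obj (op M)).obj N ≃ₗ[k] EddE k N q) := by
  let P := projectiveResolution M
  let S := ((P.complex.linearYonedaObj k N).sc' 0 1 2)
  let i : ((Ext k (ModuleCat.{0} R) 1).obj (op M)).obj N ≅ S.moduleCatLeftHomologyData.H :=
    P.isoExt 1 N ≪≫ (HomologicalComplex.homologyIsoSc' _ 0 1 2 (by simp) (by simp)) ≪≫
      S.moduleCatLeftHomologyData.homologyIso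
  let q : P.complex.X 0 →ₗ[R] M := (P.π.f 0).hom
  let d1 : P.complex.X 1 →ₗ[R] P.complex.X 0 := (P.complex.d 1 0).hom
  let d2 : P.complex.X 2 →ₗ[R] P.complex.X 1 := (P.complex.d 2 1).hom
  have h1 : Function.Exact d1 q := by
    have := P.exact₀
    rwa [ShortComplex.ShortExact.moduleCat_exact_iff_function_exact] at this
  have h2 : Function.Exact d2 d1 := by
    have := P.exact_succ 0
    rwa [ShortComplex.ShortExact.moduleCat_exact_iff_function_exact] at this
  have hq : Function.Surjective q := (ModuleCat.epi_iff_surjective (P.π.f 0)).1 inferInstance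
  have hproj : Module.Projective R (P.complex.X 0) :=
    (IsProjective.iff_projective _).2 (P.projective 0)
  refine ⟨P.complex.X 0, q, hproj, hq, ⟨i.toLinearEquiv ≪≫ₗ ?_⟩⟩
  let d1' : P.complex.X 1 →ₗ[R] LinearMap.ker q := d1.codRestrict _ (fun x => h1.apply_apply_eq_zero x)
  have hd1' : Function.Surjective d1' := by
    rintro ⟨x, hx⟩
    obtain ⟨y, hy⟩ := (h1 x).1 hx
    exact ⟨y, Subtype.ext hy⟩
  let t : (LinearMap.ker q →ₗ[R] N) →ₗ[k] LinearMap.ker S.g.hom :=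
    LinearMap.codRestrict _
      { toFun := fun f => (ModuleCat.ofHom (f ∘ₗ d1') : P.complex.X 1 ⟶ N)
        map_add' := fun _ _ => rfl
        map_smul' := fun _ _ => rfl } (fun f => by
      change (P.complex.d 2 1 ≫ ModuleCat.ofHom (f ∘ₗ d1') : P.complex.X 2 ⟶ N) = 0
      ext x
      have : d1' (d2 x) = 0 := Subtype.ext (h2.apply_apply_eq_zero x)
      change f (d1' (d2 x)) = 0
      rw [this, map_zero])
  have ht : Function.Bijective t := by
    constructor
    · intro f g hfg
      have h : (ModuleCat.ofHom (f ∘ₗ d1') : P.complex.X 1 ⟶ N) = ModuleCat.ofHom (g ∘ₗ d1') :=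
        congrArg Subtype.val hfg
      ext x
      obtain ⟨y, rfl⟩ := hd1' x
      exact congr($h y)
    · rintro ⟨f, hf⟩
      change P.complex.X 1 ⟶ N at f
      have hf' : (P.complex.d 2 1 ≫ f : P.complex.X 2 ⟶ N) = 0 := hf
      obtain ⟨h, hh, -⟩ := edd_glue d1' (0 : LinearMap.ker q →ₗ[R] LinearMap.ker q) f.hom 0
        (fun c => by
          obtain ⟨y, rfl⟩ := hd1' c
          exact ⟨y, 0, by simp⟩) (fun x y hxy => by
          have hx : d1 x = 0 := by
            have h3 : d1' x = 0 := by simpa using hxy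
            exact congrArg Subtype.val h3
          obtain ⟨z, rfl⟩ := (h2 x).1 hx
          have : f.hom (d2 z) = 0 := congr($hf' z)
          simp [this])
      refine ⟨h, Subtype.ext ?_⟩
      change (ModuleCat.ofHom (h ∘ₗ d1') : P.complex.X 1 ⟶ N) = f
      rw [hh]; rfl
  refine (Submodule.Quotient.equiv _ _ (LinearEquiv.ofBijective t ht) ?_).symm
  ext y
  constructor
  · rintro ⟨_, ⟨g, rfl⟩, rfl⟩
    exact ⟨(ModuleCat.ofHom g : P.complex.X 0 ⟶ N), rfl⟩
  · rintro ⟨g, rfl⟩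
    change P.complex.X 0 ⟶ N at g
    exact ⟨_, ⟨g.hom, rfl⟩, rfl⟩

variable [FiniteDimensional k R]

theorem edd_fin {P M N : Type} [AddCommGroup P] [AddCommGroup M]
    [AddCommGroup N] [Module R P] [Module R M] [Module R N] [Module k N]
    [IsScalarTower k R N] [Module.Finite R P] [Module.Finite R N] (p : P →ₗ[R] M) :
    FiniteDimensional k (LinearMap.ker p →ₗ[R] N) := by
  let : Module k P := Module.restrictScalars k R P
  have : IsScalarTower k R P := IsScalarTower.restrictScalars k R P
  have : Module.Finite k P := Module.Finite.trans R P
  have : Module.Finite k N := Module.Finite.trans R N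
  have : Module.Finite k (LinearMap.ker p) :=
    inferInstanceAs (Module.Finite k ((LinearMap.ker p).restrictScalars k))
  let F : (LinearMap.ker p →ₗ[R] N) →ₗ[k] (LinearMap.ker p →ₗ[k] N) :=
    { toFun := fun f => f.restrictScalars k
      map_add' := fun _ _ => rfl
      map_smul' := fun _ _ => rfl }
  exact Module.Finite.of_injective F (LinearMap.restrictScalars_injective k)

theorem edd_finrank (M N : ModuleCat.{0} R) {P : Type} [AddCommGroup P] [Module R P]
    [Module.Finite R P] [Module.Projective R P] [Module.Finite R N] (p : P →ₗ[R] M)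
    (hp : Function.Surjective p) :
    Module.finrank k (((Ext k (ModuleCat.{0} R) 1).obj (op M)).obj N) =
      Module.finrank k (EddE k N p) := by
  obtain ⟨Q, q, hQ, hq, ⟨e⟩⟩ := edd_res k M N
  have := edd_fin (k := k) (N := N) p
  obtain ⟨t, ht⟩ := edd_cmp (k := k) (N := N) p q hp hq
  obtain ⟨s, hs⟩ := edd_cmp (k := k) (N := N) q p hq hp
  have : FiniteDimensional k (EddE k N q) := Module.Finite.of_injective s hs
  rw [e.finrank_eq]
  exact le_antisymm (LinearMap.finrank_le_finrank_of_injective hs)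
    (LinearMap.finrank_le_finrank_of_injective ht)

theorem edd_main (J X₁ X₂ : ModuleCat.{0} R)
    [Module.Finite R J] [Module.Finite R X₂]
    (hJ : Subsingleton (((Ext k (ModuleCat.{0} R) 1).obj (op J)).obj J))
    (u : J →ₗ[R] X₂) (v : X₂ →ₗ[R] X₁)
    (hu : Function.Injective u) (hv : Function.Surjective v) (huv : Function.Exact u v)
    (hnonsplit : ¬ ∃ r : X₂ →ₗ[R] J, r ∘ₗ u = LinearMap.id) :
    Module.finrank k (((Ext k (ModuleCat.{0} R) 1).obj (op X₂)).obj J) <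
      Module.finrank k (((Ext k (ModuleCat.{0} R) 1).obj (op X₁)).obj J) := by
  obtain ⟨n, p, hp⟩ := Module.Finite.exists_fin' R X₂
  have hvp : Function.Surjective (v ∘ₗ p) := hv.comp hp
  rw [edd_finrank X₂ J p hp, edd_finrank X₁ J (v ∘ₗ p) hvp]
  have := edd_fin (k := k) (N := J) p
  have := edd_fin (k := k) (N := J) (v ∘ₗ p)
  have hle : LinearMap.ker p ≤ LinearMap.ker (v ∘ₗ p) := LinearMap.ker_le_ker_comp _ _
  let ι : LinearMap.ker p →ₗ[R] LinearMap.ker (v ∘ₗ p) := Submodule.inclusion hle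
  let T : EddE k J (v ∘ₗ p) →ₗ[k] EddE k J p := Submodule.mapQ _ _ (eddPre k ι) (by
    rintro _ ⟨g, rfl⟩
    exact ⟨g, by ext x; rfl⟩)
  -- the map from the kernel to `J`
  have hex : ∀ x : LinearMap.ker (v ∘ₗ p), ∃ j : J, u j = p x := fun x => (huv _).1 x.2
  let w : LinearMap.ker (v ∘ₗ p) →ₗ[R] J :=
    (LinearEquiv.ofInjective u hu).symm.toLinearMap ∘ₗ
      (p ∘ₗ (LinearMap.ker (v ∘ₗ p)).subtype).codRestrict _ (fun x => hex x)
  have hw : ∀ x, u (w x) = p x := fun x => by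
    have := LinearEquiv.apply_symm_apply (LinearEquiv.ofInjective u hu)
      ((p ∘ₗ (LinearMap.ker (v ∘ₗ p)).subtype).codRestrict _ (fun x => hex x) x)
    exact congrArg Subtype.val this
  have hwker : ∀ x, w x = 0 → (x : Fin n → R) ∈ LinearMap.ker p := fun x hx => by
    rw [LinearMap.mem_ker, ← hw, hx, map_zero]
  have hws : Function.Surjective w := fun j => by
    obtain ⟨y, hy⟩ := hp (u j)
    refine ⟨⟨y, ?_⟩, hu ?_⟩
    · simp [hy, huv.apply_apply_eq_zero]
    · rw [hw, hy]
  have hT : Function.Surjective T := by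
    intro y
    obtain ⟨f, rfl⟩ := Submodule.Quotient.mk_surjective _ y
    obtain ⟨Q, q, hQ, hq, ⟨e⟩⟩ := edd_res k J J
    have : Subsingleton (EddE k J q) := e.symm.toEquiv.subsingleton
    obtain ⟨φ, hφ⟩ := Module.projective_lifting_property w q hws
    have hφ' : ∀ x, w (φ x) = q x := fun x => LinearMap.congr_fun hφ x
    let ψ : LinearMap.ker q →ₗ[R] LinearMap.ker p :=
      ((LinearMap.ker (v ∘ₗ p)).subtype ∘ₗ φ ∘ₗ (LinearMap.ker q).subtype).codRestrict _
        (fun x => hwker _ (by simp [hφ']))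
    have hψ : ∀ x, ι (ψ x) = φ x := fun x => rfl
    have h0 : (Submodule.Quotient.mk (f ∘ₗ ψ) : EddE k J q) = 0 := Subsingleton.elim _ _
    rw [Submodule.Quotient.mk_eq_zero] at h0
    obtain ⟨g, hg⟩ := h0
    have hg' : ∀ y : LinearMap.ker q, g y = f (ψ y) := fun y => LinearMap.congr_fun hg y
    obtain ⟨h, h1, -⟩ := edd_glue ι φ f g (fun c => by
        obtain ⟨y, hy⟩ := hq (w c)
        exact ⟨⟨(c - φ y : LinearMap.ker (v ∘ₗ p)), hwker _ (by simp [hφ', hy])⟩, y,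
          by ext1; simp [ι]⟩) (fun x y hxy => by
        have hwι : w (ι x) = 0 := hu (by rw [hw, map_zero]; exact x.2)
        have hy : y ∈ LinearMap.ker q := by
          have := congrArg w hxy
          simpa [hφ', hwι] using this
        have : x = - ψ ⟨y, hy⟩ := by
          ext1
          have h3 : ι x = - φ y := eq_neg_of_add_eq_zero_left hxy
          have h4 : (ι x : Fin n → R) = ((- φ y : LinearMap.ker (v ∘ₗ p)) : Fin n → R) :=
            congrArg Subtype.val h3
          exact h4
        rw [this, map_neg, hg' ⟨y, hy⟩]; simp)
    exact ⟨Submodule.Quotient.mk h, congrArg Submodule.Quotient.mk h1⟩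
  have hwne : (Submodule.Quotient.mk w : EddE k J (v ∘ₗ p)) ≠ 0 := by
    intro h0
    rw [Submodule.Quotient.mk_eq_zero] at h0
    obtain ⟨g, hg⟩ := h0
    have hg' : ∀ y : LinearMap.ker (v ∘ₗ p), g y = w y := fun y => LinearMap.congr_fun hg y
    obtain ⟨r, hr, -⟩ := edd_glue p (0 : X₂ →ₗ[R] X₂) g 0 (fun c => by
      obtain ⟨y, rfl⟩ := hp c
      exact ⟨y, 0, by simp⟩) (fun x y hxy => by
      have hx : p x = 0 := by simpa using hxy
      have : g x = w ⟨x, hle hx⟩ := hg' ⟨x, hle hx⟩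
      have h2 : w ⟨x, hle hx⟩ = 0 := hu (by rw [hw, map_zero]; exact hx)
      simp [this, h2])
    refine hnonsplit ⟨r, ?_⟩
    ext j
    obtain ⟨x, rfl⟩ := hws j
    have : r (p x) = g x := LinearMap.congr_fun hr x
    simp [hw, this, hg']
  have hTw : T (Submodule.Quotient.mk w) = 0 := by
    rw [Submodule.mapQ_apply, Submodule.Quotient.mk_eq_zero]
    have : eddPre k (N := J) ι w = 0 := by
      ext x
      exact hu (((hw (ι x)).trans x.2).trans (map_zero u).symm)
    rw [this]
    exact zero_mem _
  have hker : 0 < Module.finrank k (LinearMap.ker T) := by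
    rw [Module.finrank_pos_iff_exists_ne_zero]
    exact ⟨⟨_, hTw⟩, fun h => hwne (congrArg Subtype.val h)⟩
  have h1 := LinearMap.finrank_range_add_finrank_ker T
  rw [LinearMap.range_eq_top.2 hT, finrank_top] at h1
  omega

end Helper

/-- Let `0 → J → X₂ → X₁ → 0` be a non-split short exact sequence of
(finite dimensional) `A`-modules with `Ext¹_A(J, J) = 0`. Then
`dim Ext¹_A(X₁, J) > dim Ext¹_A(X₂, J)`. -/
theorem ext1_dim_drop
    (k A : Type) [Field k] [Ring A] [Algebra k A] [FiniteDimensional k A]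
    (J X₁ X₂ : ModuleCat.{0} Aᵐᵒᵖ)
    [Module.Finite Aᵐᵒᵖ J] [Module.Finite Aᵐᵒᵖ X₁] [Module.Finite Aᵐᵒᵖ X₂]
    (hJ : Subsingleton (rext1 k A J J))
    (u : J →ₗ[Aᵐᵒᵖ] X₂) (v : X₂ →ₗ[Aᵐᵒᵖ] X₁)
    (hu : Function.Injective u) (hv : Function.Surjective v) (huv : Function.Exact u v)
    (hnonsplit : ¬ ∃ r : X₂ →ₗ[Aᵐᵒᵖ] J, r ∘ₗ u = LinearMap.id) :
    Module.finrank k (rext1 k A X₂ J) < Module.finrank k (rext1 k A X₁ J) := edd_main (R := Aᵐᵒᵖ) J X₁ X₂ hJ u v hu hv huv hnonsplit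
end
end
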